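/- arXiv:1104.3687 — 8 statements merged into one kernel-verified Lean document; each statement's English description precedes it below -/
import Mathlib

section
/- Let N ≥ 2 be an integer, K > 0, μ ≥ 0, ξ ∈ ℝ, α ≥ 0, and d_1,…,d_N ∈ ℝ. Let I ⊆ ℝ be an open interval and let a_1,…,a_N : I → ℝ be twice differentiable functions with a_i(t) > 0 for all t ∈ I, satisfying ä_i(t) = ξ / a_i(t) for all t ∈ I and all i. Define s(t,x) = Σ_{k=1}^N (x_k+d_k)²/a_k(t)², ρ(t,x) = α·e^{−ξ s(t,x)/(2K)} / ∏_{k=1}^N a_k(t), and u_i(t,x) = (ȧ_i(t)/a_i(t))·(x_i + d_i). Then (ρ, u) satisfies, at every (t,x) ∈ I × ℝ^N, the compressible Euler/Navier–Stokes equations with γ = 1: the mass equation ∂ρ/∂t + Σ_{k=1}^N ∂(ρ u_k)/∂x_k = 0 and, for each i = 1,…,N, the momentum equation ρ·(∂u_i/∂t + Σ_{k=1}^N u_k ∂u_i/∂x_k) + K·∂ρ/∂x_i = μ·Σ_{k=1}^N ∂²u_i/∂x_k². -/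
/-!
The level sets of `s` are transported by the flow of `u`, i.e. `∂ₜs + u · ∇s = 0`, while
`div u = ∑ ȧₖ / aₖ` is the logarithmic derivative of `∏ aₖ`. Hence `f(s) / ∏ aₖ` satisfies the mass
equation for *every* differentiable profile `f`. As `u` is affine in `x`, the viscous term vanishes,
and the acceleration of a fluid particle is `(äᵢ / aᵢ) (xᵢ + dᵢ)`. When `γ = 1` the pressure is
linear in `ρ`, so it balances this acceleration once `f' = -ξ / (2K) f` and `äᵢ = ξ / aᵢ`.
-/

open Function (update)

section

variable {𝕜 ι : Type*} [NontriviallyNormedField 𝕜]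

/-- The velocity field `uᵢ(t, x) = (ȧᵢ / aᵢ) (xᵢ + dᵢ)` of the flow that stretches the `i`-th axis
about `-dᵢ` by the factor `aᵢ(t)`. -/
noncomputable def stretchingVelocity (a : ι → 𝕜 → 𝕜) (d : ι → 𝕜) (i : ι) (t : 𝕜) (x : ι → 𝕜) : 𝕜 :=
  logDeriv (a i) t * (x i + d i)

variable {a : ι → 𝕜 → 𝕜} {t : 𝕜}

section Velocity

variable [DecidableEq ι]

theorem hasDerivAt_stretchingVelocity_update (a : ι → 𝕜 → 𝕜) (d : ι → 𝕜) (t : 𝕜) (x : ι → 𝕜)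
    (i k : ι) (y : 𝕜) :
    HasDerivAt (fun z => stretchingVelocity a d i t (update x k z))
      (if i = k then logDeriv (a i) t else 0) y := by
  have h := ((hasDerivAt_pi.1 (hasDerivAt_update x k y) i).add_const (d i)).const_mul
    (logDeriv (a i) t)
  simpa [Pi.single_apply, stretchingVelocity] using h

theorem deriv_deriv_stretchingVelocity_update (a : ι → 𝕜 → 𝕜) (d : ι → 𝕜) (t : 𝕜) (x : ι → 𝕜)
    (i k : ι) (y : 𝕜) :
    deriv (fun z => deriv (fun w => stretchingVelocity a d i t (update x k w)) z) y = 0 := by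
  simp only [(hasDerivAt_stretchingVelocity_update a d t x i k _).deriv, deriv_const]

theorem material_deriv_stretchingVelocity [Fintype ι] {i : ι} (ha₀ : a i t ≠ 0)
    (ha : DifferentiableAt 𝕜 (a i) t) (ha' : DifferentiableAt 𝕜 (deriv (a i)) t)
    (d x : ι → 𝕜) :
    deriv (fun τ => stretchingVelocity a d i τ x) t
      + ∑ k, stretchingVelocity a d k t x
        * deriv (fun y => stretchingVelocity a d i t (update x k y)) (x k)
      = deriv (deriv (a i)) t / a i t * (x i + d i) := by
  have h_time : HasDerivAt (fun τ => stretchingVelocity a d i τ x)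
      ((deriv (deriv (a i)) t * a i t - deriv (a i) t * deriv (a i) t) / a i t ^ 2
        * (x i + d i)) t :=
    (ha'.hasDerivAt.div ha.hasDerivAt ha₀).mul_const _
  have h_transport : ∑ k, stretchingVelocity a d k t x
      * deriv (fun y => stretchingVelocity a d i t (update x k y)) (x k)
      = stretchingVelocity a d i t x * logDeriv (a i) t := by
    simp [(hasDerivAt_stretchingVelocity_update a d t x i _ _).deriv]
  rw [h_time.deriv, h_transport, stretchingVelocity, logDeriv_apply]
  field_simp
  ring

end Velocity

variable [Fintype ι]

/-- The quadratic form `s(t, x) = ∑ₖ (xₖ + dₖ)² / aₖ(t)²`, whose level sets over `ℝ` are the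
ellipsoids centred at `-d` with semi-axes proportional to the `aₖ(t)`. -/
noncomputable def ellipsoidForm (a : ι → 𝕜 → 𝕜) (d : ι → 𝕜) (t : 𝕜) (x : ι → 𝕜) : 𝕜 :=
  ∑ k, (x k + d k) ^ 2 / a k t ^ 2

/-- The self-similar density `f(s(t, x)) / ∏ₖ aₖ(t)` with profile `f`, constant on the level
sets of the form `s(t, ·)`. -/
noncomputable def ellipsoidDensity (f : 𝕜 → 𝕜) (a : ι → 𝕜 → 𝕜) (d : ι → 𝕜) (t : 𝕜) (x : ι → 𝕜) :
    𝕜 :=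
  f (ellipsoidForm a d t x) / ∏ k, a k t

variable {f : 𝕜 → 𝕜} {f' : 𝕜} {d x : ι → 𝕜}

-- The value is `-u · ∇s`: the form `s` is transported by the flow.
theorem hasDerivAt_ellipsoidForm (ha₀ : ∀ k, a k t ≠ 0) (ha : ∀ k, DifferentiableAt 𝕜 (a k) t)
    (d x : ι → 𝕜) :
    HasDerivAt (fun τ => ellipsoidForm a d τ x)
      (-∑ k, 2 * (x k + d k) / a k t ^ 2 * stretchingVelocity a d k t x) t := by
  rw [← Finset.sum_neg_distrib]
  refine HasDerivAt.fun_sum fun k _ => ?_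
  have h := (hasDerivAt_const t ((x k + d k) ^ 2)).fun_div ((ha k).hasDerivAt.fun_pow 2)
    (pow_ne_zero 2 (ha₀ k))
  refine h.congr_deriv ?_
  have := ha₀ k
  simp only [stretchingVelocity, logDeriv_apply]
  field_simp
  ring

theorem hasDerivAt_ellipsoidForm_update [DecidableEq ι] (a : ι → 𝕜 → 𝕜) (d : ι → 𝕜) (t : 𝕜)
    (x : ι → 𝕜) (k : ι) :
    HasDerivAt (fun y => ellipsoidForm a d t (update x k y)) (2 * (x k + d k) / a k t ^ 2)
      (x k) := by
  have h := HasDerivAt.fun_sum (u := Finset.univ) fun j _ =>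
    (((hasDerivAt_pi.1 (hasDerivAt_update x k (x k)) j).add_const (d j)).fun_pow 2).div_const
      (a j t ^ 2)
  refine h.congr_deriv ?_
  simp [Pi.single_apply, ite_div]

theorem hasDerivAt_ellipsoidDensity (hf : HasDerivAt f f' (ellipsoidForm a d t x))
    (ha₀ : ∀ k, a k t ≠ 0) (ha : ∀ k, DifferentiableAt 𝕜 (a k) t) :
    HasDerivAt (fun τ => ellipsoidDensity f a d τ x)
      (f' / (∏ k, a k t) * -∑ k, 2 * (x k + d k) / a k t ^ 2 * stretchingVelocity a d k t x
        - ellipsoidDensity f a d t x * ∑ k, logDeriv (a k) t) t := by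
  have h_prod₀ : ∏ k, a k t ≠ 0 := Finset.prod_ne_zero_iff.2 fun k _ => ha₀ k
  have h_prod : HasDerivAt (fun τ => ∏ k, a k τ) ((∏ k, a k t) * ∑ k, logDeriv (a k) t) t := by
    have h := (DifferentiableAt.fun_finsetProd (u := Finset.univ) fun k _ => ha k).hasDerivAt
    rwa [← logDeriv_prod (fun k _ => ha₀ k) fun k _ => ha k, logDeriv_apply,
      mul_div_cancel₀ _ h_prod₀]
  have h_profile := hf.comp t (hasDerivAt_ellipsoidForm ha₀ ha d x)
  refine (h_profile.div h_prod h_prod₀).congr_deriv ?_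
  rw [ellipsoidDensity, Function.comp_apply]
  field

theorem hasDerivAt_ellipsoidDensity_update [DecidableEq ι]
    (hf : HasDerivAt f f' (ellipsoidForm a d t x)) (k : ι) :
    HasDerivAt (fun y => ellipsoidDensity f a d t (update x k y))
      (f' / (∏ j, a j t) * (2 * (x k + d k) / a k t ^ 2)) (x k) := by
  rw [div_mul_eq_mul_div]
  rw [← Function.update_eq_self k x] at hf
  exact (hf.comp (x k) (hasDerivAt_ellipsoidForm_update a d t x k)).div_const _

theorem ellipsoidDensity_mass_equation [DecidableEq ι]
    (hf : DifferentiableAt 𝕜 f (ellipsoidForm a d t x))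
    (ha₀ : ∀ k, a k t ≠ 0) (ha : ∀ k, DifferentiableAt 𝕜 (a k) t) :
    deriv (fun τ => ellipsoidDensity f a d τ x) t
      + ∑ k, deriv (fun y => ellipsoidDensity f a d t (update x k y)
        * stretchingVelocity a d k t (update x k y)) (x k) = 0 := by
  have h_flux (k : ι) := (hasDerivAt_ellipsoidDensity_update hf.hasDerivAt k).fun_mul
    (hasDerivAt_stretchingVelocity_update a d t x k k (x k))
  simp only [(hasDerivAt_ellipsoidDensity hf.hasDerivAt ha₀ ha).deriv, (h_flux _).deriv,
    Function.update_eq_self, if_true, Finset.sum_add_distrib, ← Finset.mul_sum,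
    mul_assoc (_ / ∏ k, a k t)]
  ring

end

theorem hasDerivAt_const_mul_exp_mul_div (α b c σ : ℝ) :
    HasDerivAt (fun σ => α * Real.exp (b * σ / c)) (b / c * (α * Real.exp (b * σ / c))) σ := by
  refine ((((hasDerivAt_id σ).const_mul b).div_const c).exp.const_mul α).congr_deriv ?_
  simp only [id, mul_one]
  ring

theorem ellipsoidDensity_exp_pressure_gradient {ι : Type*} [Fintype ι] [DecidableEq ι] {K : ℝ}
    (hK : K ≠ 0) (ξ α : ℝ) (a : ι → ℝ → ℝ) (d : ι → ℝ) (t : ℝ) (x : ι → ℝ) (i : ι) :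
    K * deriv (fun y => ellipsoidDensity (fun σ => α * Real.exp (-ξ * σ / (2 * K))) a d t
        (update x i y)) (x i)
      = -(ellipsoidDensity (fun σ => α * Real.exp (-ξ * σ / (2 * K))) a d t x
        * (ξ / a i t / a i t * (x i + d i))) := by
  rw [(hasDerivAt_ellipsoidDensity_update
    (hasDerivAt_const_mul_exp_mul_div α (-ξ) (2 * K) _) i).deriv, ellipsoidDensity]
  field_simp

theorem euler_navier_stokes_gamma_one_elliptic_solution_general
    {ι : Type*} [Fintype ι] [DecidableEq ι] {K : ℝ} (μ ξ α : ℝ) (hK : K ≠ 0) (d : ι → ℝ)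
    (a : ι → ℝ → ℝ) {t : ℝ} (ha₀ : ∀ i, a i t ≠ 0)
    (ha : ∀ i, DifferentiableAt ℝ (a i) t ∧ DifferentiableAt ℝ (deriv (a i)) t)
    (hEmden : ∀ i, deriv (deriv (a i)) t = ξ / a i t)
    (s : ℝ → (ι → ℝ) → ℝ) (hs : ∀ τ x, s τ x = ∑ k, (x k + d k) ^ 2 / a k τ ^ 2)
    (ρ : ℝ → (ι → ℝ) → ℝ)
    (hρ : ∀ τ x, ρ τ x = α * Real.exp (-ξ * s τ x / (2 * K)) / ∏ k, a k τ)
    (u : ι → ℝ → (ι → ℝ) → ℝ) (hu : ∀ i τ x, u i τ x = deriv (a i) τ / a i τ * (x i + d i))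
    (x : ι → ℝ) :
    (deriv (fun τ => ρ τ x) t
        + ∑ k, deriv (fun y => ρ t (update x k y) * u k t (update x k y)) (x k) = 0)
      ∧ ∀ i, ρ t x * (deriv (fun τ => u i τ x) t
            + ∑ k, u k t x * deriv (fun y => u i t (update x k y)) (x k))
          + K * deriv (fun y => ρ t (update x i y)) (x i)
        = μ * ∑ k, deriv (fun y => deriv (fun z => u i t (update x k z)) y) (x k) := by
  obtain rfl : s = ellipsoidForm a d := funext₂ hs
  obtain rfl : ρ = ellipsoidDensity (fun σ => α * Real.exp (-ξ * σ / (2 * K))) a d := funext₂ hρ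
  obtain rfl : u = stretchingVelocity a d := funext₃ hu
  refine ⟨ellipsoidDensity_mass_equation (by fun_prop) ha₀ fun k => (ha k).1, fun i => ?_⟩
  have h_viscous : ∑ k, deriv (fun y => deriv (fun z =>
      stretchingVelocity a d i t (update x k z)) y) (x k) = 0 :=
    Finset.sum_eq_zero fun k _ => deriv_deriv_stretchingVelocity_update a d t x i k (x k)
  rw [material_deriv_stretchingVelocity (ha₀ i) (ha i).1 (ha i).2, hEmden,
    ellipsoidDensity_exp_pressure_gradient hK, h_viscous, mul_zero, add_neg_cancel]

/-- For `γ = 1`, with `aᵢ` solving the Emden system `äᵢ = ξ/aᵢ`,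
the functions `ρ(t,x) = α e^{−ξ s/(2K)} / ∏ₖ aₖ(t)`, `s = Σₖ (xₖ+dₖ)²/aₖ(t)²`,
`uᵢ(t,x) = (ȧᵢ/aᵢ)(xᵢ+dᵢ)` solve the compressible Euler/Navier–Stokes equations:
the mass equation and, for each `i`, the momentum equation
`ρ(∂ₜuᵢ + Σₖ uₖ ∂ₖuᵢ) + K ∂ᵢρ = μ Δuᵢ`. -/
theorem euler_navier_stokes_gamma_one_elliptic_solution
    (N : ℕ) (hN : 2 ≤ N)
    (K μ ξ α : ℝ) (hK : 0 < K) (hμ : 0 ≤ μ) (hα : 0 ≤ α)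
    (d : Fin N → ℝ)
    (I : Set ℝ) (hI_open : IsOpen I) (hI_conn : I.OrdConnected)
    (a : Fin N → ℝ → ℝ)
    (ha_pos : ∀ i : Fin N, ∀ t ∈ I, 0 < a i t)
    (ha_diff : ∀ i : Fin N, ∀ t ∈ I,
      DifferentiableAt ℝ (a i) t ∧ DifferentiableAt ℝ (deriv (a i)) t)
    (hEmden : ∀ i : Fin N, ∀ t ∈ I, deriv (deriv (a i)) t = ξ / a i t)
    (s : ℝ → (Fin N → ℝ) → ℝ)
    (hs : ∀ (t : ℝ) (x : Fin N → ℝ), s t x = ∑ k : Fin N, (x k + d k) ^ 2 / (a k t) ^ 2)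
    (ρ : ℝ → (Fin N → ℝ) → ℝ)
    (hρ : ∀ (t : ℝ) (x : Fin N → ℝ),
      ρ t x = α * Real.exp (-ξ * s t x / (2 * K)) / ∏ k : Fin N, a k t)
    (u : Fin N → ℝ → (Fin N → ℝ) → ℝ)
    (hu : ∀ (i : Fin N) (t : ℝ) (x : Fin N → ℝ),
      u i t x = deriv (a i) t / a i t * (x i + d i)) :
    ∀ t ∈ I, ∀ x : Fin N → ℝ,
      (deriv (fun τ => ρ τ x) t
        + ∑ k : Fin N,
            deriv (fun y => ρ t (Function.update x k y) * u k t (Function.update x k y)) (x k)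
        = 0)
      ∧
      (∀ i : Fin N,
        ρ t x * (deriv (fun τ => u i τ x) t
            + ∑ k : Fin N, u k t x * deriv (fun y => u i t (Function.update x k y)) (x k))
          + K * deriv (fun y => ρ t (Function.update x i y)) (x i)
        = μ * ∑ k : Fin N,
            deriv (fun y => deriv (fun z => u i t (Function.update x k z)) y) (x k)) :=
  fun _ ht => euler_navier_stokes_gamma_one_elliptic_solution_general μ ξ α hK.ne' d a
    (fun i => (ha_pos i _ ht).ne') (fun i => ha_diff i _ ht) (fun i => hEmden i _ ht) s hs ρ hρ u hu
end

section
/- Let N ≥ 2 be an integer, K > 0, μ ≥ 0, γ > 1, ξ ∈ ℝ, α ≥ 0, and d_1,…,d_N ∈ ℝ. Let I ⊆ ℝ be an open interval and let a_1,…,a_N : I → ℝ be twice differentiable functions with a_i(t) > 0 for all t ∈ I, satisfying the Emden dynamical system ä_i(t) = ξ / (a_i(t)·(∏_{k=1}^N a_k(t))^{γ−1}) for all t ∈ I and all i. Define s(t,x) = Σ_{k=1}^N (x_k+d_k)²/a_k(t)², and on the open set Ω = {(t,x) ∈ I × ℝ^N : α − ξ(γ−1)s(t,x)/(2Kγ)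 > 0} define ρ(t,x) = (α − ξ(γ−1)s(t,x)/(2Kγ))^{1/(γ−1)} / ∏_{k=1}^N a_k(t) and u_i(t,x) = (ȧ_i(t)/a_i(t))·(x_i + d_i). Then at every point of Ω, (ρ, u) satisfies the mass equation ∂ρ/∂t + Σ_{k=1}^N ∂(ρ u_k)/∂x_k = 0 and, for each i, the momentum equation ρ·(∂u_i/∂t + Σ_{k=1}^N u_k ∂u_i/∂x_k) + K·∂(ρ^γ)/∂x_i = μ·Σ_{k=1}^N ∂²u_i/∂x_k². -/
/-!
The form `s` is constant along the flow `u`, since `∂ₜs + ∑ₖ uₖ ∂ₖs = 0`, while `div u` is the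
logarithmic derivative of `∏ₖ aₖ`; hence `f(s) / ∏ₖ aₖ` satisfies the mass equation for *every*
differentiable profile `f`. The velocity is affine in `x`, so the viscous term vanishes and the
acceleration of a fluid particle is `(äᵢ / aᵢ) (xᵢ + dᵢ)`. Given the Emden system, the pressure
gradient balances it as soon as the profile solves the ordinary differential equation
`f' = -(ξ / (2Kγ)) f ^ (2 - γ)`, and `f(σ) = (α - ξ(γ - 1)σ / (2Kγ)) ^ (1 / (γ - 1))` does.
-/

open Function

section Equations

variable {ι : Type*} [Fintype ι] [DecidableEq ι]

/-- The mass equation `ρₜ + ∇·(ρu) = 0` at the point `(t, x)`. The partial derivative of `f`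
along the `k`-th coordinate is the derivative of `y ↦ f (update x k y)` at `x k`. -/
def MassEquationAt (ρ : ℝ → (ι → ℝ) → ℝ) (u : ι → ℝ → (ι → ℝ) → ℝ) (t : ℝ) (x : ι → ℝ) : Prop :=
  deriv (fun τ => ρ τ x) t
    + ∑ k, deriv (fun y => ρ t (update x k y) * u k t (update x k y)) (x k) = 0

/-- The `i`-th momentum equation `ρ(∂ₜuᵢ + u·∇uᵢ) + K ∂ᵢ(ρ^γ) = μ Δuᵢ` at the point `(t, x)`. -/
def MomentumEquationAt (K γ μ : ℝ) (ρ : ℝ → (ι → ℝ) → ℝ) (u : ι → ℝ → (ι → ℝ) → ℝ)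
    (t : ℝ) (x : ι → ℝ) (i : ι) : Prop :=
  ρ t x * (deriv (fun τ => u i τ x) t
      + ∑ k, u k t x * deriv (fun y => u i t (update x k y)) (x k))
    + K * deriv (fun y => ρ t (update x i y) ^ γ) (x i)
  = μ * ∑ k, deriv (fun y => deriv (fun z => u i t (update x k z)) y) (x k)

end Equations

theorem hasDerivAt_prod_logDeriv {𝕜 𝕜' ι : Type*} [NontriviallyNormedField 𝕜]
    [NontriviallyNormedField 𝕜'] [NormedAlgebra 𝕜 𝕜'] {s : Finset ι} {f : ι → 𝕜 → 𝕜'} {x : 𝕜}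
    (hf : ∀ i ∈ s, f i x ≠ 0) (hf' : ∀ i ∈ s, DifferentiableAt 𝕜 (f i) x) :
    HasDerivAt (fun y => ∏ i ∈ s, f i y) ((∏ i ∈ s, f i x) * ∑ i ∈ s, logDeriv (f i) x) x := by
  refine (DifferentiableAt.fun_finsetProd hf').hasDerivAt.congr_deriv ?_
  rw [← logDeriv_prod hf hf', logDeriv_apply, mul_div_cancel₀ _ (Finset.prod_ne_zero_iff.2 hf)]

theorem hasDerivAt_update_apply {𝕜 ι : Type*} [NontriviallyNormedField 𝕜] [DecidableEq ι]
    (x : ι → 𝕜) (k i : ι) (y : 𝕜) :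
    HasDerivAt (fun y => update x k y i) (Pi.single (M := fun _ => 𝕜) k 1 i) y :=
  hasDerivAt_pi.1 (hasDerivAt_update x k y) i

section EllipticFlow

variable {ι : Type*}

/-- The velocity field `uᵢ = (ȧᵢ/aᵢ)(xᵢ + dᵢ)` of the flow whose particles move along
`xᵢ(t) + dᵢ = cᵢ aᵢ(t)`. -/
noncomputable def dilationVelocity (a : ι → ℝ → ℝ) (d : ι → ℝ) (i : ι) (t : ℝ) (x : ι → ℝ) : ℝ :=
  logDeriv (a i) t * (x i + d i)

theorem hasDerivAt_dilationVelocity_update [DecidableEq ι] (a : ι → ℝ → ℝ) (d : ι → ℝ) (t : ℝ)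
    (x : ι → ℝ) (i k : ι) (y : ℝ) :
    HasDerivAt (fun y => dilationVelocity a d i t (update x k y))
      (logDeriv (a i) t * Pi.single (M := fun _ => ℝ) k 1 i) y :=
  ((hasDerivAt_update_apply x k i y).add_const (d i)).const_mul _

variable [Fintype ι]

/-- The quadratic form `s = ∑ₖ (xₖ + dₖ)²/aₖ²` in `x + d`, whose level sets are ellipsoids moving
with the dilation flow. -/
noncomputable def ellipticForm (a : ι → ℝ → ℝ) (d : ι → ℝ) (t : ℝ) (x : ι → ℝ) : ℝ :=
  ∑ k, (x k + d k) ^ 2 / (a k t) ^ 2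

/-- The density `f(s)/∏ₖ aₖ` with profile `f`, constant on the ellipsoids `s = const`. -/
noncomputable def ellipticDensity (f : ℝ → ℝ) (a : ι → ℝ → ℝ) (d : ι → ℝ) (t : ℝ) (x : ι → ℝ) : ℝ :=
  f (ellipticForm a d t x) / ∏ k, a k t

variable {a : ι → ℝ → ℝ} {d : ι → ℝ} {f : ℝ → ℝ} {f' t : ℝ} {x : ι → ℝ}

theorem hasDerivAt_ellipticForm_time (ha : ∀ k, a k t ≠ 0)
    (ha' : ∀ k, DifferentiableAt ℝ (a k) t) :
    HasDerivAt (fun τ => ellipticForm a d τ x)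
      (-∑ k, dilationVelocity a d k t x * (2 * (x k + d k) / (a k t) ^ 2)) t := by
  rw [← Finset.sum_neg_distrib]
  refine HasDerivAt.fun_sum fun k _ => ?_
  have hquot := ((ha' k).hasDerivAt.fun_pow 2).fun_inv (pow_ne_zero 2 (ha k))
  refine (hquot.const_mul ((x k + d k) ^ 2)).congr_deriv ?_
  have hk := ha k
  rw [dilationVelocity, logDeriv_apply]
  simp only [Nat.cast_ofNat, Nat.add_one_sub_one, pow_one]
  field_simp

theorem hasDerivAt_ellipticDensity_time (hf : HasDerivAt f f' (ellipticForm a d t x))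
    (ha : ∀ k, a k t ≠ 0) (ha' : ∀ k, DifferentiableAt ℝ (a k) t) :
    HasDerivAt (fun τ => ellipticDensity f a d τ x)
      (-∑ k, dilationVelocity a d k t x * (f' * (2 * (x k + d k) / (a k t) ^ 2) / ∏ j, a j t)
        - ellipticDensity f a d t x * ∑ k, logDeriv (a k) t) t := by
  set S := ∑ k, dilationVelocity a d k t x * (2 * (x k + d k) / (a k t) ^ 2) with hS
  have hA : ∏ k, a k t ≠ 0 := Finset.prod_ne_zero_iff.2 fun k _ => ha k
  have hnum : HasDerivAt (fun τ => f (ellipticForm a d τ x)) (f' * -S) t :=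
    hf.comp t (hasDerivAt_ellipticForm_time ha ha')
  have hsum : ∑ k, dilationVelocity a d k t x * (f' * (2 * (x k + d k) / (a k t) ^ 2) / ∏ j, a j t)
      = f' * S / ∏ j, a j t := by
    rw [hS, Finset.mul_sum, Finset.sum_div]
    exact Finset.sum_congr rfl fun k _ => by ring
  have hdiv := hnum.fun_div
    (hasDerivAt_prod_logDeriv (fun k _ => ha k) (fun k _ => ha' k)) hA
  refine hdiv.congr_deriv ?_
  rw [hsum, ellipticDensity]
  field_simp

variable [DecidableEq ι]

theorem hasDerivAt_ellipticForm_update (a : ι → ℝ → ℝ) (d : ι → ℝ) (t : ℝ) (x : ι → ℝ) (k : ι) :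
    HasDerivAt (fun y => ellipticForm a d t (update x k y))
      (2 * (x k + d k) / (a k t) ^ 2) (x k) := by
  have hsum := HasDerivAt.fun_sum (u := Finset.univ) fun j _ =>
    (((hasDerivAt_update_apply x k j (x k)).add_const (d j)).pow 2).div_const ((a j t) ^ 2)
  exact hsum.congr_deriv (by simp [Pi.single_apply, ite_div])

theorem hasDerivAt_ellipticDensity_update (hf : HasDerivAt f f' (ellipticForm a d t x)) (k : ι) :
    HasDerivAt (fun y => ellipticDensity f a d t (update x k y))
      (f' * (2 * (x k + d k) / (a k t) ^ 2) / ∏ j, a j t) (x k) := by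
  have hf_update : HasDerivAt f f' (ellipticForm a d t (update x k (x k))) := by
    rwa [update_eq_self]
  exact (hf_update.comp (x k) (hasDerivAt_ellipticForm_update a d t x k)).div_const _

theorem massEquationAt_ellipticDensity (hf : DifferentiableAt ℝ f (ellipticForm a d t x))
    (ha : ∀ k, a k t ≠ 0) (ha' : ∀ k, DifferentiableAt ℝ (a k) t) :
    MassEquationAt (ellipticDensity f a d) (dilationVelocity a d) t x := by
  set ρ := ellipticDensity f a d
  set u := dilationVelocity a d
  set ρ' : ι → ℝ := fun k =>
    deriv f (ellipticForm a d t x) * (2 * (x k + d k) / (a k t) ^ 2) / ∏ j, a j t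
  have hflux (k : ι) : deriv (fun y => ρ t (update x k y) * u k t (update x k y)) (x k)
      = u k t x * ρ' k + ρ t x * logDeriv (a k) t := by
    rw [((hasDerivAt_ellipticDensity_update hf.hasDerivAt k).fun_mul
      (hasDerivAt_dilationVelocity_update a d t x k k (x k))).deriv]
    simp only [update_eq_self, Pi.single_eq_same, ρ, u, ρ']
    ring
  have htime : deriv (fun τ => ρ τ x) t
      = -∑ k, u k t x * ρ' k - ρ t x * ∑ k, logDeriv (a k) t :=
    (hasDerivAt_ellipticDensity_time hf.hasDerivAt ha ha').deriv
  rw [MassEquationAt, htime, Finset.sum_congr rfl fun k _ => hflux k, Finset.sum_add_distrib,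
    ← Finset.mul_sum]
  ring

theorem dilationVelocity_acceleration {i : ι} (ha : a i t ≠ 0) (ha' : DifferentiableAt ℝ (a i) t)
    (ha'' : DifferentiableAt ℝ (deriv (a i)) t) :
    deriv (fun τ => dilationVelocity a d i τ x) t
        + ∑ k, dilationVelocity a d k t x
          * deriv (fun y => dilationVelocity a d i t (update x k y)) (x k)
      = deriv (deriv (a i)) t / a i t * (x i + d i) := by
  have htime : HasDerivAt (fun τ => dilationVelocity a d i τ x)
      ((deriv (deriv (a i)) t * a i t - deriv (a i) t * deriv (a i) t) / (a i t) ^ 2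
        * (x i + d i)) t :=
    (ha''.hasDerivAt.div ha'.hasDerivAt ha).mul_const _
  have hconv : ∑ k, dilationVelocity a d k t x
        * deriv (fun y => dilationVelocity a d i t (update x k y)) (x k)
      = dilationVelocity a d i t x * logDeriv (a i) t := by
    simp [(hasDerivAt_dilationVelocity_update a d t x i _ _).deriv, Pi.single_apply]
  rw [htime.deriv, hconv, dilationVelocity, logDeriv_apply]
  field_simp
  ring

theorem dilationVelocity_laplacian (a : ι → ℝ → ℝ) (d : ι → ℝ) (t : ℝ) (x : ι → ℝ) (i : ι) :
    ∑ k, deriv (fun y => deriv (fun z => dilationVelocity a d i t (update x k z)) y) (x k) = 0 := by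
  simp only [(hasDerivAt_dilationVelocity_update a d t x i _ _).deriv, deriv_const,
    Finset.sum_const_zero]

theorem hasDerivAt_ellipticDensity_rpow_update {γ c : ℝ} (hA : 0 < ∏ k, a k t)
    (hpos : 0 < f (ellipticForm a d t x))
    (hf : HasDerivAt f (c * f (ellipticForm a d t x) ^ (2 - γ)) (ellipticForm a d t x)) (i : ι) :
    HasDerivAt (fun y => ellipticDensity f a d t (update x i y) ^ γ)
      (2 * γ * c * ellipticDensity f a d t x * (x i + d i)
        / ((a i t) ^ 2 * (∏ k, a k t) ^ (γ - 1))) (x i) := by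
  have hρ : ellipticDensity f a d t x ≠ 0 := (div_pos hpos hA).ne'
  have hpow := (hasDerivAt_ellipticDensity_update hf i).rpow_const (p := γ)
    (Or.inl (by rwa [update_eq_self]))
  refine hpow.congr_deriv ?_
  have hcancel : f (ellipticForm a d t x) ^ (2 - γ) * f (ellipticForm a d t x) ^ (γ - 1)
      = f (ellipticForm a d t x) := by
    rw [← Real.rpow_add hpos, show 2 - γ + (γ - 1) = 1 by ring, Real.rpow_one]
  rw [update_eq_self, ellipticDensity, Real.div_rpow hpos.le hA.le]
  linear_combination (2 * γ * c * (x i + d i) / ((a i t) ^ 2 * (∏ k, a k t) ^ (γ - 1))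
    / ∏ k, a k t) * hcancel

theorem momentumEquationAt_ellipticDensity {K γ ξ : ℝ} (μ : ℝ) (hK : K ≠ 0) (hγ : γ ≠ 0)
    (hA : 0 < ∏ k, a k t) {i : ι} (ha' : DifferentiableAt ℝ (a i) t)
    (ha'' : DifferentiableAt ℝ (deriv (a i)) t)
    (hEmden : deriv (deriv (a i)) t = ξ / (a i t * (∏ k, a k t) ^ (γ - 1)))
    (hpos : 0 < f (ellipticForm a d t x))
    (hf : HasDerivAt f (-(ξ / (2 * K * γ)) * f (ellipticForm a d t x) ^ (2 - γ))
      (ellipticForm a d t x)) :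
    MomentumEquationAt K γ μ (ellipticDensity f a d) (dilationVelocity a d) t x i := by
  have ha : a i t ≠ 0 := Finset.prod_ne_zero_iff.1 hA.ne' i (Finset.mem_univ i)
  rw [MomentumEquationAt, dilationVelocity_acceleration ha ha' ha'', dilationVelocity_laplacian,
    (hasDerivAt_ellipticDensity_rpow_update hA hpos hf i).deriv, hEmden]
  field_simp
  ring

end EllipticFlow

/-- The profile `σ ↦ (α - ξ(γ - 1)σ/(2Kγ))^{1/(γ - 1)}` that balances pressure against the
acceleration of the dilation flow. It is meaningful only where the base is positive. -/
noncomputable def emdenProfile (K γ ξ α σ : ℝ) : ℝ :=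
  (α - ξ * (γ - 1) * σ / (2 * K * γ)) ^ (1 / (γ - 1))

theorem hasDerivAt_emdenProfile {K γ ξ α σ : ℝ} (hγ : γ ≠ 1)
    (hσ : 0 < α - ξ * (γ - 1) * σ / (2 * K * γ)) :
    HasDerivAt (emdenProfile K γ ξ α)
      (-(ξ / (2 * K * γ)) * emdenProfile K γ ξ α σ ^ (2 - γ)) σ := by
  have hγ' : γ - 1 ≠ 0 := sub_ne_zero.2 hγ
  have hbase : HasDerivAt (fun σ => α - ξ * (γ - 1) * σ / (2 * K * γ))
      (-(ξ * (γ - 1) / (2 * K * γ))) σ := by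
    simpa using (((hasDerivAt_id σ).const_mul (ξ * (γ - 1))).div_const (2 * K * γ)).const_sub α
  refine (hbase.rpow_const (p := 1 / (γ - 1)) (Or.inl hσ.ne')).congr_deriv ?_
  have hexp : 1 / (γ - 1) * (2 - γ) = 1 / (γ - 1) - 1 := by
    field_simp
    ring
  rw [emdenProfile, ← Real.rpow_mul hσ.le, hexp]
  field_simp

theorem euler_navier_stokes_gamma_gt_one_elliptic_solution_general
    {ι : Type*} [Fintype ι] [DecidableEq ι] {K γ ξ α : ℝ} (μ : ℝ)
    (hK : K ≠ 0) (hγ₀ : γ ≠ 0) (hγ₁ : γ ≠ 1) {a : ι → ℝ → ℝ} {d : ι → ℝ} {t : ℝ} {x : ι → ℝ}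
    (ha : ∀ i, 0 < a i t) (ha' : ∀ i, DifferentiableAt ℝ (a i) t)
    (ha'' : ∀ i, DifferentiableAt ℝ (deriv (a i)) t)
    (hEmden : ∀ i, deriv (deriv (a i)) t = ξ / (a i t * (∏ k, a k t) ^ (γ - 1)))
    (hx : 0 < α - ξ * (γ - 1) * ellipticForm a d t x / (2 * K * γ)) :
    MassEquationAt (ellipticDensity (emdenProfile K γ ξ α) a d) (dilationVelocity a d) t x ∧
      ∀ i, MomentumEquationAt K γ μ (ellipticDensity (emdenProfile K γ ξ α) a d)
        (dilationVelocity a d) t x i := by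
  have hf := hasDerivAt_emdenProfile hγ₁ hx
  have hA : 0 < ∏ k, a k t := Finset.prod_pos fun k _ => ha k
  exact ⟨massEquationAt_ellipticDensity hf.differentiableAt (fun k => (ha k).ne') ha', fun i =>
    momentumEquationAt_ellipticDensity μ hK hγ₀ hA (ha' i) (ha'' i) (hEmden i)
      (Real.rpow_pos_of_pos hx _) hf⟩

/-- For `γ > 1`, with `aᵢ` solving the Emden dynamical system
`äᵢ = ξ/(aᵢ (∏ₖ aₖ)^{γ−1})`, the functions
`ρ(t,x) = (α − ξ(γ−1)s/(2Kγ))^{1/(γ−1)} / ∏ₖ aₖ(t)`, `s = Σₖ (xₖ+dₖ)²/aₖ(t)²`,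
`uᵢ(t,x) = (ȧᵢ/aᵢ)(xᵢ+dᵢ)` solve, on the region `Ω` where
`α − ξ(γ−1)s/(2Kγ) > 0`, the mass equation and, for each `i`, the momentum
equation `ρ(∂ₜuᵢ + Σₖ uₖ ∂ₖuᵢ) + K ∂ᵢ(ρ^γ) = μ Δuᵢ`. -/
theorem euler_navier_stokes_gamma_gt_one_elliptic_solution
    (N : ℕ) (hN : 2 ≤ N)
    (K μ γ ξ α : ℝ) (hK : 0 < K) (hμ : 0 ≤ μ) (hγ : 1 < γ) (hα : 0 ≤ α)
    (d : Fin N → ℝ)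
    (I : Set ℝ) (hI_open : IsOpen I) (hI_conn : I.OrdConnected)
    (a : Fin N → ℝ → ℝ)
    (ha_pos : ∀ i : Fin N, ∀ t ∈ I, 0 < a i t)
    (ha_diff : ∀ i : Fin N, ∀ t ∈ I,
      DifferentiableAt ℝ (a i) t ∧ DifferentiableAt ℝ (deriv (a i)) t)
    (hEmden : ∀ i : Fin N, ∀ t ∈ I,
      deriv (deriv (a i)) t = ξ / (a i t * (∏ k : Fin N, a k t) ^ (γ - 1)))
    (s : ℝ → (Fin N → ℝ) → ℝ)
    (hs : ∀ (t : ℝ) (x : Fin N → ℝ), s t x = ∑ k : Fin N, (x k + d k) ^ 2 / (a k t) ^ 2)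
    (ρ : ℝ → (Fin N → ℝ) → ℝ)
    (hρ : ∀ (t : ℝ) (x : Fin N → ℝ),
      ρ t x = (α - ξ * (γ - 1) * s t x / (2 * K * γ)) ^ (1 / (γ - 1))
                / ∏ k : Fin N, a k t)
    (u : Fin N → ℝ → (Fin N → ℝ) → ℝ)
    (hu : ∀ (i : Fin N) (t : ℝ) (x : Fin N → ℝ),
      u i t x = deriv (a i) t / a i t * (x i + d i)) :
    ∀ t ∈ I, ∀ x : Fin N → ℝ,
      0 < α - ξ * (γ - 1) * s t x / (2 * K * γ) →
      (deriv (fun τ => ρ τ x) t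
        + ∑ k : Fin N,
            deriv (fun y => ρ t (Function.update x k y) * u k t (Function.update x k y)) (x k)
        = 0)
      ∧
      (∀ i : Fin N,
        ρ t x * (deriv (fun τ => u i τ x) t
            + ∑ k : Fin N, u k t x * deriv (fun y => u i t (Function.update x k y)) (x k))
          + K * deriv (fun y => (ρ t (Function.update x i y)) ^ γ) (x i)
        = μ * ∑ k : Fin N,
            deriv (fun y => deriv (fun z => u i t (Function.update x k z)) y) (x k)) := by
  obtain rfl := funext₂ hs
  obtain rfl := funext₂ hρ
  obtain rfl := funext fun i => funext₂ (hu i)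
  exact fun t ht x hx => euler_navier_stokes_gamma_gt_one_elliptic_solution_general μ hK.ne'
    (by linarith) hγ.ne' (ha_pos · t ht) (fun i => (ha_diff i t ht).1)
    (fun i => (ha_diff i t ht).2) (hEmden · t ht) hx
end

section
/- Let ξ > 0, a₀ > 0 and a₁ ∈ ℝ. Let T ∈ (0, ∞] and let a : [0,T) → ℝ be a twice differentiable function with a(t) > 0 for all t ∈ [0,T), satisfying ä(t) = ξ / a(t), a(0) = a₀, ȧ(0) = a₁. Then for all t ∈ [0,T): a(t) ≥ a₀ · exp(−a₁²/(2ξ)). -/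
open scoped ENNReal

/-! The energy `ȧ² / 2 - ξ log a` is conserved along solutions of `ä = ξ / a`. Solving for `a`
gives `a t = a t₀ * exp ((ȧ t ^ 2 - ȧ t₀ ^ 2) / (2 * ξ))`, and for `ξ > 0` dropping `ȧ t ^ 2`
can only decrease the right-hand side. -/

section

variable {s : Set ℝ} {t₀ t : ℝ}

theorem newton_energy_eq {x v f F : ℝ → ℝ} (hs : Convex ℝ s)
    (hx : ∀ τ ∈ s, HasDerivWithinAt x (v τ) s τ)
    (hv : ∀ τ ∈ s, HasDerivWithinAt v (f (x τ)) s τ)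
    (hF : ∀ τ ∈ s, HasDerivAt F (f (x τ)) (x τ)) (ht₀ : t₀ ∈ s) (ht : t ∈ s) :
    v t ^ 2 / 2 - F (x t) = v t₀ ^ 2 / 2 - F (x t₀) := by
  have energy_deriv : ∀ τ ∈ s,
      HasDerivWithinAt (fun τ ↦ v τ ^ 2 / 2 - F (x τ)) 0 s τ := fun τ hτ ↦
    ((((hv τ hτ).pow 2).div_const 2).sub ((hF τ hτ).comp_hasDerivWithinAt τ (hx τ hτ))).congr_deriv
      (by ring)
  have diff_le := hs.norm_image_sub_le_of_norm_hasDerivWithin_le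
    energy_deriv (fun _ _ ↦ norm_zero.le) ht₀ ht
  rw [zero_mul] at diff_le
  exact sub_eq_zero.mp (norm_le_zero_iff.mp diff_le)

variable {ξ : ℝ} {a v : ℝ → ℝ}

theorem emden_gamma_one_eq_mul_exp (hξ : ξ ≠ 0) (hs : Convex ℝ s)
    (ha_pos : ∀ τ ∈ s, 0 < a τ)
    (ha : ∀ τ ∈ s, HasDerivWithinAt a (v τ) s τ)
    (hv : ∀ τ ∈ s, HasDerivWithinAt v (ξ / a τ) s τ) (ht₀ : t₀ ∈ s) (ht : t ∈ s) :
    a t = a t₀ * Real.exp ((v t ^ 2 - v t₀ ^ 2) / (2 * ξ)) := by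
  have energy_eq : v t ^ 2 / 2 - ξ * Real.log (a t) = v t₀ ^ 2 / 2 - ξ * Real.log (a t₀) :=
    newton_energy_eq (f := fun y ↦ ξ / y) (F := fun y ↦ ξ * Real.log y) hs ha hv
      (fun τ hτ ↦ (Real.hasDerivAt_log (ha_pos τ hτ).ne').const_mul ξ) ht₀ ht
  have log_eq : Real.log (a t) = Real.log (a t₀) + (v t ^ 2 - v t₀ ^ 2) / (2 * ξ) := by
    field_simp
    linarith
  rw [← Real.exp_log (ha_pos t ht), log_eq, Real.exp_add, Real.exp_log (ha_pos t₀ ht₀)]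

theorem emden_gamma_one_xi_pos_lower_bound_general (hξ : 0 < ξ) (hs : Convex ℝ s)
    (ha_pos : ∀ τ ∈ s, 0 < a τ)
    (ha : ∀ τ ∈ s, HasDerivWithinAt a (v τ) s τ)
    (hv : ∀ τ ∈ s, HasDerivWithinAt v (ξ / a τ) s τ) (ht₀ : t₀ ∈ s) (ht : t ∈ s) :
    a t₀ * Real.exp (-v t₀ ^ 2 / (2 * ξ)) ≤ a t := by
  have a_t₀_pos := ha_pos t₀ ht₀
  rw [emden_gamma_one_eq_mul_exp hξ.ne' hs ha_pos ha hv ht₀ ht]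
  gcongr
  linarith [sq_nonneg (v t)]

end

/-- For `ξ > 0`, a positive, twice differentiable solution of
`ä = ξ/a` on `[0,T)` with `a(0) = a₀ > 0`, `ȧ(0) = a₁` satisfies the lower
bound `a(t) ≥ a₀ exp(−a₁²/(2ξ))` on `[0,T)`. -/
theorem emden_gamma_one_xi_pos_lower_bound
    (ξ a₀ a₁ : ℝ) (hξ : 0 < ξ) (ha₀ : 0 < a₀)
    (T : ℝ≥0∞) (hT : 0 < T)
    (a : ℝ → ℝ)
    (ha_pos : ∀ t : ℝ, 0 ≤ t → ENNReal.ofReal t < T → 0 < a t)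
    (ha_diff : ∀ t : ℝ, 0 ≤ t → ENNReal.ofReal t < T →
      DifferentiableAt ℝ a t ∧ DifferentiableAt ℝ (deriv a) t)
    (hODE : ∀ t : ℝ, 0 ≤ t → ENNReal.ofReal t < T → deriv (deriv a) t = ξ / a t)
    (h0 : a 0 = a₀) (h1 : deriv a 0 = a₁) :
    ∀ t : ℝ, 0 ≤ t → ENNReal.ofReal t < T →
      a₀ * Real.exp (-a₁ ^ 2 / (2 * ξ)) ≤ a t := by
  subst h0 h1
  intro t ht htT
  have domain_convex : Convex ℝ {τ : ℝ | 0 ≤ τ ∧ ENNReal.ofReal τ < T} :=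
    (ENNReal.ofReal_mono.monotoneOn (Set.Ici 0)).convex_lt (convex_Ici 0) T
  exact emden_gamma_one_xi_pos_lower_bound_general hξ domain_convex
    (fun τ hτ ↦ ha_pos τ hτ.1 hτ.2)
    (fun τ hτ ↦ (ha_diff τ hτ.1 hτ.2).1.hasDerivAt.hasDerivWithinAt)
    (fun τ hτ ↦ hODE τ hτ.1 hτ.2 ▸ (ha_diff τ hτ.1 hτ.2).2.hasDerivAt.hasDerivWithinAt)
    ⟨le_rfl, ENNReal.ofReal_zero.trans_lt hT⟩ ⟨ht, htT⟩
end

section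
/- Let ξ > 0, a₀ > 0 and a₁ ∈ ℝ. Then there exists a twice differentiable function a : [0,∞) → ℝ with a(t) > 0 for all t ≥ 0 satisfying ä(t) = ξ / a(t) for all t ≥ 0, a(0) = a₀ and ȧ(0) = a₁; i.e., the Emden equation with γ = 1, ξ > 0 has a global-in-time positive solution. -/
/-!
Along a solution the energy `ȧ² / 2 - ξ log a` is conserved, so `a` is a function of the velocity:
`a = a₀ exp ((ȧ² - a₁²) / (2 ξ))`. The second-order equation thus becomes the autonomous first-order
equation `v̇ = ξ / a(v)`, whose right-hand side is positive and bounded, because `a(v)` stays above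
`a₀ exp (-a₁² / (2 ξ))`. Separation of variables solves it for all times.
-/

open Filter Function

theorem surjective_of_forall_le_deriv {f : ℝ → ℝ} {c : ℝ} (hc : 0 < c)
    (hf' : ∀ x, c ≤ deriv f x) : Surjective f := by
  have hf : Differentiable ℝ f := fun x ↦
    differentiableAt_of_deriv_ne_zero (hc.trans_le (hf' x)).ne'
  have growth := mul_sub_le_image_sub_of_le_deriv hf hf'
  refine hf.continuous.surjective ?_ ?_
  · refine tendsto_atTop_mono' atTop ?_
      (tendsto_atTop_add_const_right _ (f 0) (tendsto_id.const_mul_atTop hc))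
    filter_upwards [eventually_ge_atTop 0] with x hx
    simpa [le_sub_iff_add_le] using growth hx
  · refine tendsto_atBot_mono' atBot ?_
      (tendsto_atBot_add_const_right _ (f 0) (tendsto_id.const_mul_atBot hc))
    filter_upwards [eventually_le_atBot 0] with x hx
    have := growth hx
    simp only [id]
    linarith

theorem exists_leftInverse_forall_hasDerivAt_inv_deriv {f : ℝ → ℝ} {c : ℝ} (hc : 0 < c)
    (hf' : ∀ x, c ≤ deriv f x) :
    ∃ g : ℝ → ℝ, LeftInverse g f ∧ ∀ y, HasDerivAt g (deriv f (g y))⁻¹ y := by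
  have deriv_pos : ∀ x, 0 < deriv f x := fun x ↦ hc.trans_le (hf' x)
  let e : ℝ ≃o ℝ := (strictMono_of_deriv_pos deriv_pos).orderIsoOfSurjective f
    (surjective_of_forall_le_deriv hc hf')
  exact ⟨e.symm, e.symm_apply_apply, fun y ↦
    (differentiableAt_of_deriv_ne_zero (deriv_pos _).ne').hasDerivAt.of_local_left_inverse
      e.symm.continuous.continuousAt (deriv_pos _).ne' (.of_forall e.apply_symm_apply)⟩

theorem exists_forall_hasDerivAt_eq_of_pos_of_le {g : ℝ → ℝ} {C : ℝ} (hg : Continuous g)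
    (hpos : ∀ x, 0 < g x) (hle : ∀ x, g x ≤ C) (t₀ x₀ : ℝ) :
    ∃ x : ℝ → ℝ, x t₀ = x₀ ∧ ∀ t, HasDerivAt x (g (x t)) t := by
  -- `time y` is the time at which the solution reaches `y`.
  let time : ℝ → ℝ := fun y ↦ t₀ + ∫ s in x₀..y, (g s)⁻¹
  have hasDerivAt_time (y : ℝ) : HasDerivAt time (g y)⁻¹ y :=
    ((hg.inv₀ fun s ↦ (hpos s).ne').integral_hasStrictDerivAt x₀ y).hasDerivAt.const_add t₀
  have deriv_time (y : ℝ) : deriv time y = (g y)⁻¹ := (hasDerivAt_time y).deriv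
  have inv_le_deriv_time (y : ℝ) : C⁻¹ ≤ deriv time y := by
    rw [deriv_time]
    exact inv_anti₀ (hpos y) (hle y)
  have C_pos : 0 < C := (hpos x₀).trans_le (hle x₀)
  obtain ⟨x, leftInverse_x, hasDerivAt_x⟩ := exists_leftInverse_forall_hasDerivAt_inv_deriv
    (inv_pos.2 C_pos) inv_le_deriv_time
  refine ⟨x, ?_, fun t ↦ ?_⟩
  · simpa [time] using leftInverse_x x₀
  · simpa only [deriv_time, inv_inv] using hasDerivAt_x t

/-- The position at velocity `v` on the level set through `(a₀, a₁)` of the energy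
`v ^ 2 / 2 - ξ * log a` of the Emden equation `ä = ξ / a`. -/
noncomputable def emdenPosition (ξ a₀ a₁ v : ℝ) : ℝ :=
  a₀ * Real.exp ((v ^ 2 - a₁ ^ 2) / (2 * ξ))

theorem emdenPosition_pos {a₀ : ℝ} (ha₀ : 0 < a₀) (ξ a₁ v : ℝ) : 0 < emdenPosition ξ a₀ a₁ v :=
  mul_pos ha₀ (Real.exp_pos _)

theorem emdenPosition_self (ξ a₀ a₁ : ℝ) : emdenPosition ξ a₀ a₁ a₁ = a₀ := by
  simp [emdenPosition]

theorem emdenPosition_zero_le {ξ a₀ : ℝ} (hξ : 0 ≤ ξ) (ha₀ : 0 ≤ a₀) (a₁ v : ℝ) :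
    emdenPosition ξ a₀ a₁ 0 ≤ emdenPosition ξ a₀ a₁ v := by
  have zero_sq_le : (0 : ℝ) ^ 2 ≤ v ^ 2 := by simpa using sq_nonneg v
  unfold emdenPosition
  gcongr a₀ * Real.exp ((?_ - a₁ ^ 2) / (2 * ξ))

theorem hasDerivAt_emdenPosition (ξ a₀ a₁ v : ℝ) :
    HasDerivAt (emdenPosition ξ a₀ a₁) (emdenPosition ξ a₀ a₁ v * (v / ξ)) v := by
  have := ((((hasDerivAt_pow 2 v).sub_const (a₁ ^ 2)).div_const (2 * ξ)).exp).const_mul a₀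
  refine this.congr_deriv ?_
  simp only [emdenPosition]
  field_simp
  ring

theorem continuous_emdenPosition (ξ a₀ a₁ : ℝ) : Continuous (emdenPosition ξ a₀ a₁) := by
  unfold emdenPosition
  fun_prop

theorem exists_forall_hasDerivAt_emden_velocity {ξ a₀ : ℝ} (hξ : 0 < ξ) (ha₀ : 0 < a₀)
    (a₁ t₀ : ℝ) :
    ∃ v : ℝ → ℝ, v t₀ = a₁ ∧ ∀ t, HasDerivAt v (ξ / emdenPosition ξ a₀ a₁ (v t)) t := by
  have position_pos := emdenPosition_pos ha₀ ξ a₁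
  exact exists_forall_hasDerivAt_eq_of_pos_of_le
    (continuous_const.div (continuous_emdenPosition ξ a₀ a₁) fun v ↦ (position_pos v).ne')
    (fun v ↦ div_pos hξ (position_pos v))
    (fun v ↦ div_le_div_of_nonneg_left hξ.le (position_pos 0)
      (emdenPosition_zero_le hξ.le ha₀.le a₁ v)) t₀ a₁

theorem hasDerivAt_emdenPosition_comp {ξ a₀ a₁ t : ℝ} {v : ℝ → ℝ} (hξ : ξ ≠ 0) (ha₀ : a₀ ≠ 0)
    (hv : HasDerivAt v (ξ / emdenPosition ξ a₀ a₁ (v t)) t) :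
    HasDerivAt (fun s ↦ emdenPosition ξ a₀ a₁ (v s)) (v t) t := by
  have position_ne_zero : emdenPosition ξ a₀ a₁ (v t) ≠ 0 := mul_ne_zero ha₀ (Real.exp_ne_zero _)
  refine ((hasDerivAt_emdenPosition ξ a₀ a₁ (v t)).comp t hv).congr_deriv ?_
  field_simp

theorem emden_gamma_one_xi_pos_global_existence_general
    (ξ a₀ a₁ : ℝ) (hξ : 0 < ξ) (ha₀ : 0 < a₀) :
    ∃ a : ℝ → ℝ,
      (∀ t, 0 < a t) ∧ Differentiable ℝ a ∧ Differentiable ℝ (deriv a) ∧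
      (∀ t, deriv (deriv a) t = ξ / a t) ∧ a 0 = a₀ ∧ deriv a 0 = a₁ := by
  obtain ⟨v, v_zero, hasDerivAt_v⟩ := exists_forall_hasDerivAt_emden_velocity hξ ha₀ a₁ 0
  let a : ℝ → ℝ := fun t ↦ emdenPosition ξ a₀ a₁ (v t)
  have hasDerivAt_a (t : ℝ) : HasDerivAt a (v t) t :=
    hasDerivAt_emdenPosition_comp hξ.ne' ha₀.ne' (hasDerivAt_v t)
  have deriv_a : deriv a = v := deriv_eq hasDerivAt_a
  refine ⟨a, fun t ↦ emdenPosition_pos ha₀ ξ a₁ (v t),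
    fun t ↦ (hasDerivAt_a t).differentiableAt, ?_, ?_, ?_, ?_⟩
  · exact deriv_a ▸ fun t ↦ (hasDerivAt_v t).differentiableAt
  · exact deriv_a ▸ fun t ↦ (hasDerivAt_v t).deriv
  · simp only [a, v_zero, emdenPosition_self]
  · rw [deriv_a, v_zero]

/-- For `ξ > 0`, the Emden equation `ä = ξ/a` with `a(0) = a₀ > 0`
and `ȧ(0) = a₁` has a global-in-time positive, twice differentiable solution
on `[0,∞)`. -/
theorem emden_gamma_one_xi_pos_global_existence
    (ξ a₀ a₁ : ℝ) (hξ : 0 < ξ) (ha₀ : 0 < a₀) :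
    ∃ a : ℝ → ℝ,
      (∀ t : ℝ, 0 ≤ t → 0 < a t) ∧
      (∀ t : ℝ, 0 ≤ t → DifferentiableAt ℝ a t ∧ DifferentiableAt ℝ (deriv a) t) ∧
      (∀ t : ℝ, 0 ≤ t → deriv (deriv a) t = ξ / a t) ∧
      a 0 = a₀ ∧ deriv a 0 = a₁ := by
  obtain ⟨a, pos, diff, diff', ode, init⟩ :=
    emden_gamma_one_xi_pos_global_existence_general ξ a₀ a₁ hξ ha₀
  exact ⟨a, fun t _ ↦ pos t, fun t _ ↦ ⟨diff t, diff' t⟩, fun t _ ↦ ode t, init⟩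
end

section
/- Let ξ < 0, a₀ > 0 and a₁ ∈ ℝ. Let T ∈ (0, ∞] and let a : [0,T) → ℝ be a twice differentiable function with a(t) > 0 for all t ∈ [0,T), satisfying ä(t) = ξ / a(t), a(0) = a₀, ȧ(0) = a₁. Then for all t ∈ [0,T): a(t) ≤ a₀ · exp(a₁²/(2|ξ|)). -/
open scoped ENNReal

/-!
The Emden equation `ä = ξ / a` is Newton's equation for the potential `-ξ log a`, so the energy
`ȧ² / 2 - ξ log a` is conserved. Hence `a(t) = a(t₀) exp ((ȧ(t)² - ȧ(t₀)²) / (2ξ))` for `ξ ≠ 0`,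
and when `ξ < 0` the term `ȧ(t)² / (2ξ)` is nonpositive and can be dropped.
-/

theorem eq_of_hasDerivWithinAt_zero {𝕜 E : Type*} [RCLike 𝕜] [NormedAddCommGroup E]
    [NormedSpace 𝕜 E] {f : 𝕜 → E} {s : Set 𝕜} (hs : Convex ℝ s)
    (hf : ∀ t ∈ s, HasDerivWithinAt f 0 s t) {t₀ t : 𝕜} (ht₀ : t₀ ∈ s) (ht : t ∈ s) :
    f t = f t₀ := by
  have hnorm : ‖f t - f t₀‖ ≤ 0 * ‖t - t₀‖ :=
    Convex.norm_image_sub_le_of_norm_hasDerivWithin_le hf (fun _ _ => norm_zero.le) hs ht₀ ht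
  rwa [zero_mul, norm_le_zero_iff, sub_eq_zero] at hnorm

theorem newton_energy_eq_s8 {E : Type*} [NormedAddCommGroup E] [InnerProductSpace ℝ E]
    [CompleteSpace E] {V : E → ℝ} {gradV : E → E} {x v : ℝ → E} {s : Set ℝ} (hs : Convex ℝ s)
    (hV : ∀ t ∈ s, HasGradientAt V (gradV (x t)) (x t))
    (hx : ∀ t ∈ s, HasDerivWithinAt x (v t) s t)
    (hv : ∀ t ∈ s, HasDerivWithinAt v (-gradV (x t)) s t)
    {t₀ t : ℝ} (ht₀ : t₀ ∈ s) (ht : t ∈ s) :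
    ‖v t‖ ^ 2 / 2 + V (x t) = ‖v t₀‖ ^ 2 / 2 + V (x t₀) := by
  refine eq_of_hasDerivWithinAt_zero (f := fun r => ‖v r‖ ^ 2 / 2 + V (x r)) hs
    (fun r hr => ?_) ht₀ ht
  have hkinetic : HasDerivWithinAt (fun r => ‖v r‖ ^ 2 / 2)
      (-inner ℝ (gradV (x r)) (v r)) s r := by
    refine ((hv r hr).norm_sq.div_const 2).congr_deriv ?_
    rw [inner_neg_right, real_inner_comm]
    ring
  have hpotential : HasDerivWithinAt (fun r => V (x r)) (inner ℝ (gradV (x r)) (v r)) s r :=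
    (hV r hr).hasFDerivAt.comp_hasDerivWithinAt r (hx r hr)
  exact (hkinetic.add hpotential).congr_deriv (neg_add_cancel _)

section Emden

variable {ξ : ℝ} {a v : ℝ → ℝ} {s : Set ℝ} {t₀ t : ℝ}

theorem emden_sq_velocity_sub_sq_velocity (hs : Convex ℝ s) (ha_ne : ∀ t ∈ s, a t ≠ 0)
    (ha : ∀ t ∈ s, HasDerivWithinAt a (v t) s t)
    (hv : ∀ t ∈ s, HasDerivWithinAt v (ξ / a t) s t) (ht₀ : t₀ ∈ s) (ht : t ∈ s) :
    v t ^ 2 - v t₀ ^ 2 = 2 * ξ * (Real.log (a t) - Real.log (a t₀)) := by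
  have hgrad : ∀ t ∈ s, HasGradientAt (fun y => -ξ * Real.log y) (-ξ / a t) (a t) := fun t ht =>
    ((Real.hasDerivAt_log (ha_ne t ht)).const_mul (-ξ)).hasGradientAt'
  have henergy := newton_energy_eq_s8 (gradV := fun y => -ξ / y) hs hgrad ha
    (by simpa only [neg_div, neg_neg] using hv) ht₀ ht
  simp only [Real.norm_eq_abs, sq_abs] at henergy
  linarith

theorem emden_eq_mul_exp (hξ : ξ ≠ 0) (hs : Convex ℝ s) (ha_pos : ∀ t ∈ s, 0 < a t)
    (ha : ∀ t ∈ s, HasDerivWithinAt a (v t) s t)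
    (hv : ∀ t ∈ s, HasDerivWithinAt v (ξ / a t) s t) (ht₀ : t₀ ∈ s) (ht : t ∈ s) :
    a t = a t₀ * Real.exp ((v t ^ 2 - v t₀ ^ 2) / (2 * ξ)) := by
  rw [emden_sq_velocity_sub_sq_velocity hs (fun r hr => (ha_pos r hr).ne') ha hv ht₀ ht,
    mul_div_cancel_left₀ _ (mul_ne_zero two_ne_zero hξ), Real.exp_sub,
    Real.exp_log (ha_pos t ht), Real.exp_log (ha_pos t₀ ht₀),
    mul_div_cancel₀ _ (ha_pos t₀ ht₀).ne']

theorem emden_gamma_one_xi_neg_upper_bound_general (hξ : ξ < 0) (hs : Convex ℝ s)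
    (ha_pos : ∀ t ∈ s, 0 < a t) (ha : ∀ t ∈ s, HasDerivWithinAt a (v t) s t)
    (hv : ∀ t ∈ s, HasDerivWithinAt v (ξ / a t) s t) (ht₀ : t₀ ∈ s) (ht : t ∈ s) :
    a t ≤ a t₀ * Real.exp (v t₀ ^ 2 / (2 * |ξ|)) := by
  have hexponent : (v t ^ 2 - v t₀ ^ 2) / (2 * ξ) ≤ v t₀ ^ 2 / (2 * |ξ|) := by
    rw [← neg_div_neg_eq, neg_sub, ← mul_neg, ← abs_of_neg hξ]
    gcongr
    exact sub_le_self _ (sq_nonneg _)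
  rw [emden_eq_mul_exp hξ.ne hs ha_pos ha hv ht₀ ht]
  exact mul_le_mul_of_nonneg_left (Real.exp_le_exp.mpr hexponent) (ha_pos t₀ ht₀).le

end Emden

theorem convex_setOf_nonneg_ofReal_lt (T : ℝ≥0∞) :
    Convex ℝ {t : ℝ | 0 ≤ t ∧ ENNReal.ofReal t < T} :=
  (convex_Ici 0).inter
    (Set.ordConnected_Iio.preimage_mono fun _ _ => ENNReal.ofReal_le_ofReal).convex

/-- For `ξ < 0`, a positive, twice differentiable solution of
`ä = ξ/a` on `[0,T)` with `a(0) = a₀ > 0`, `ȧ(0) = a₁` satisfies the upper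
bound `a(t) ≤ a₀ exp(a₁²/(2|ξ|))` on `[0,T)`. -/
theorem emden_gamma_one_xi_neg_upper_bound
    (ξ a₀ a₁ : ℝ) (hξ : ξ < 0) (ha₀ : 0 < a₀)
    (T : ℝ≥0∞) (hT : 0 < T)
    (a : ℝ → ℝ)
    (ha_pos : ∀ t : ℝ, 0 ≤ t → ENNReal.ofReal t < T → 0 < a t)
    (ha_diff : ∀ t : ℝ, 0 ≤ t → ENNReal.ofReal t < T →
      DifferentiableAt ℝ a t ∧ DifferentiableAt ℝ (deriv a) t)
    (hODE : ∀ t : ℝ, 0 ≤ t → ENNReal.ofReal t < T → deriv (deriv a) t = ξ / a t)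
    (h0 : a 0 = a₀) (h1 : deriv a 0 = a₁) :
    ∀ t : ℝ, 0 ≤ t → ENNReal.ofReal t < T →
      a t ≤ a₀ * Real.exp (a₁ ^ 2 / (2 * |ξ|)) := by
  intro t ht htT
  rw [← h0, ← h1]
  exact emden_gamma_one_xi_neg_upper_bound_general hξ (convex_setOf_nonneg_ofReal_lt T)
    (fun r hr => ha_pos r hr.1 hr.2)
    (fun r hr => (ha_diff r hr.1 hr.2).1.hasDerivAt.hasDerivWithinAt)
    (fun r hr => hODE r hr.1 hr.2 ▸ (ha_diff r hr.1 hr.2).2.hasDerivAt.hasDerivWithinAt)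
    ⟨le_rfl, by rwa [ENNReal.ofReal_zero]⟩ ⟨ht, htT⟩
end

section
/- Let ξ < 0, a₀ > 0 and a₁ ∈ ℝ. Then there is no twice differentiable function a : [0,∞) → ℝ with a(t) > 0 for all t ≥ 0 satisfying ä(t) = ξ / a(t) for all t ≥ 0, a(0) = a₀ and ȧ(0) = a₁; i.e., every positive solution of the Emden equation with γ = 1 and ξ < 0 breaks down (a reaches 0) in finite time. -/
/-!
A positive function `a` on `[0, ∞)` with `ä ≤ ξ / a < 0` is concave, and a concave function that is
bounded below on a half-line never has a negative derivative: its tangent there would drag it to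
`-∞`. So `ȧ ≥ 0`. Concavity also gives `a t ≤ C * (1 + t)`, hence `ä t ≤ (ξ / C) / (1 + t)`. The
logarithmic divergence of the integral of the right-hand side forces `ȧ → -∞`, a contradiction.
-/

open Set Filter

section HalfLine

variable {f f' : ℝ → ℝ} {t₀ : ℝ}

theorem le_of_hasDerivWithinAt_Ici_le {g g' : ℝ → ℝ}
    (hf : ∀ t ∈ Ici t₀, HasDerivWithinAt f (f' t) (Ici t₀) t)
    (hg : ∀ t ∈ Ici t₀, HasDerivWithinAt g (g' t) (Ici t₀) t)
    (h₀ : f t₀ ≤ g t₀) (hle : ∀ t ∈ Ici t₀, f' t ≤ g' t) {t : ℝ} (ht : t₀ ≤ t) :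
    f t ≤ g t :=
  image_le_of_deriv_right_le_deriv_boundary
    (fun s hs ↦ (hf s hs.1).continuousWithinAt.mono Icc_subset_Ici_self)
    (fun s hs ↦ (hf s hs.1).mono (Ici_subset_Ici.2 hs.1)) h₀
    (fun s hs ↦ (hg s hs.1).continuousWithinAt.mono Icc_subset_Ici_self)
    (fun s hs ↦ (hg s hs.1).mono (Ici_subset_Ici.2 hs.1))
    (fun s hs ↦ hle s hs.1) ⟨ht, le_rfl⟩

theorem le_tangent_of_antitoneOn_hasDerivWithinAt
    (hf : ∀ t ∈ Ici t₀, HasDerivWithinAt f (f' t) (Ici t₀) t) (hf' : AntitoneOn f' (Ici t₀))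
    {s t : ℝ} (hs : t₀ ≤ s) (hst : s ≤ t) :
    f t ≤ f s + f' s * (t - s) := by
  have tangent_deriv (x : ℝ) : HasDerivAt (fun x ↦ f s + f' s * (x - s)) (f' s) x := by
    simpa using (((hasDerivAt_id x).sub_const s).const_mul (f' s)).const_add (f s)
  exact le_of_hasDerivWithinAt_Ici_le
    (fun x hx ↦ (hf x (hs.trans hx)).mono (Ici_subset_Ici.2 hs))
    (fun x _ ↦ (tangent_deriv x).hasDerivWithinAt) (by simp)
    (fun x hx ↦ hf' hs (hs.trans hx) hx) hst

theorem nonneg_of_antitoneOn_hasDerivWithinAt_of_bddBelow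
    (hf : ∀ t ∈ Ici t₀, HasDerivWithinAt f (f' t) (Ici t₀) t) (hf' : AntitoneOn f' (Ici t₀))
    (hbdd : BddBelow (f '' Ici t₀)) {s : ℝ} (hs : t₀ ≤ s) :
    0 ≤ f' s := by
  by_contra! hneg
  obtain ⟨m, hm⟩ := hbdd
  have tangent_tendsto : Tendsto (fun t ↦ f s + f' s * (t - s)) atTop atBot :=
    tendsto_atBot_add_const_left _ _
      ((tendsto_atTop_add_const_right _ (-s) tendsto_id).const_mul_atTop_of_neg hneg)
  obtain ⟨t, htm, hst⟩ :=
    ((tangent_tendsto.eventually_lt_atBot m).and (eventually_ge_atTop s)).exists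
  have hmt : m ≤ f t := hm (mem_image_of_mem f (hs.trans hst))
  exact (hmt.trans (le_tangent_of_antitoneOn_hasDerivWithinAt hf hf' hs hst)).not_gt htm

theorem antitoneOn_Ici_of_hasDerivWithinAt_nonpos
    (hf : ∀ t ∈ Ici t₀, HasDerivWithinAt f (f' t) (Ici t₀) t)
    (hf' : ∀ t ∈ Ici t₀, f' t ≤ 0) :
    AntitoneOn f (Ici t₀) :=
  antitoneOn_of_hasDerivWithinAt_nonpos (convex_Ici t₀)
    (fun t ht ↦ (hf t ht).continuousWithinAt)
    (fun t ht ↦ (hf t (interior_subset ht)).mono interior_subset)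
    (fun t ht ↦ hf' t (interior_subset ht))

theorem tendsto_atBot_of_hasDerivWithinAt_le_div_one_add {k : ℝ} (hk : k < 0)
    (hf : ∀ t ∈ Ici 0, HasDerivWithinAt f (f' t) (Ici 0) t)
    (hf' : ∀ t ∈ Ici 0, f' t ≤ k / (1 + t)) :
    Tendsto f atTop atBot := by
  have log_deriv (t : ℝ) (ht : 0 ≤ t) :
      HasDerivAt (fun t ↦ f 0 + k * Real.log (1 + t)) (k / (1 + t)) t := by
    have one_add_ne : 1 + t ≠ 0 := by positivity
    simpa [div_eq_mul_inv] using
      ((((hasDerivAt_id t).const_add 1).log one_add_ne).const_mul k).const_add (f 0)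
  have le_log (t : ℝ) (ht : 0 ≤ t) : f t ≤ f 0 + k * Real.log (1 + t) :=
    le_of_hasDerivWithinAt_Ici_le hf (fun t ht ↦ (log_deriv t ht).hasDerivWithinAt)
      (by simp) hf' ht
  have log_tendsto : Tendsto (fun t ↦ f 0 + k * Real.log (1 + t)) atTop atBot :=
    tendsto_atBot_add_const_left _ _
      ((Real.tendsto_log_atTop.comp
        (tendsto_atTop_add_const_left _ 1 tendsto_id)).const_mul_atTop_of_neg hk)
  exact tendsto_atBot_mono' _ ((eventually_ge_atTop 0).mono le_log) log_tendsto

end HalfLine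

theorem emden_gamma_one_xi_neg_no_global_solution_general {ξ : ℝ} (hξ : ξ < 0)
    {a a' a'' : ℝ → ℝ} (hpos : ∀ t ∈ Ici 0, 0 < a t)
    (ha : ∀ t ∈ Ici 0, HasDerivWithinAt a (a' t) (Ici 0) t)
    (ha' : ∀ t ∈ Ici 0, HasDerivWithinAt a' (a'' t) (Ici 0) t)
    (hode : ∀ t ∈ Ici 0, a'' t ≤ ξ / a t) :
    False := by
  have a'_antitone : AntitoneOn a' (Ici 0) :=
    antitoneOn_Ici_of_hasDerivWithinAt_nonpos ha' fun t ht ↦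
      (hode t ht).trans (div_neg_of_neg_of_pos hξ (hpos t ht)).le
  have a_bddBelow : BddBelow (a '' Ici 0) :=
    ⟨0, forall_mem_image.2 fun t ht ↦ (hpos t ht).le⟩
  set C := max (a 0) (a' 0)
  have hC : 0 < C := lt_max_of_lt_left (hpos 0 self_mem_Ici)
  have a_le (t : ℝ) (ht : 0 ≤ t) : a t ≤ C * (1 + t) :=
    calc a t ≤ a 0 + a' 0 * (t - 0) :=
          le_tangent_of_antitoneOn_hasDerivWithinAt ha a'_antitone le_rfl ht
      _ ≤ C + C * (t - 0) := by gcongr <;> simp [C]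
      _ = C * (1 + t) := by ring
  have a''_le (t : ℝ) (ht : 0 ≤ t) : a'' t ≤ ξ / C / (1 + t) :=
    calc a'' t ≤ ξ / a t := hode t ht
      _ ≤ ξ / (C * (1 + t)) := by
          simpa only [div_eq_mul_inv] using
            mul_le_mul_of_nonpos_left (inv_anti₀ (hpos t ht) (a_le t ht)) hξ.le
      _ = ξ / C / (1 + t) := (div_div ..).symm
  have a'_tendsto : Tendsto a' atTop atBot :=
    tendsto_atBot_of_hasDerivWithinAt_le_div_one_add (div_neg_of_neg_of_pos hξ hC) ha' a''_le
  obtain ⟨t, hneg, ht⟩ := ((a'_tendsto.eventually_lt_atBot 0).and (eventually_ge_atTop 0)).exists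
  exact hneg.not_ge
    (nonneg_of_antitoneOn_hasDerivWithinAt_of_bddBelow ha a'_antitone a_bddBelow ht)

/-- For `ξ < 0`, there is no global-in-time positive, twice
differentiable solution on `[0,∞)` of the Emden equation `ä = ξ/a` with
`a(0) = a₀ > 0`, `ȧ(0) = a₁`: every positive solution breaks down in finite
time. -/
theorem emden_gamma_one_xi_neg_no_global_solution
    (ξ a₀ a₁ : ℝ) (hξ : ξ < 0) (ha₀ : 0 < a₀) :
    ¬ ∃ a : ℝ → ℝ,
      (∀ t : ℝ, 0 ≤ t → 0 < a t) ∧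
      (∀ t : ℝ, 0 ≤ t → DifferentiableAt ℝ a t ∧ DifferentiableAt ℝ (deriv a) t) ∧
      (∀ t : ℝ, 0 ≤ t → deriv (deriv a) t = ξ / a t) ∧
      a 0 = a₀ ∧ deriv a 0 = a₁ := by
  rintro ⟨a, hpos, hdiff, hode, -, -⟩
  exact emden_gamma_one_xi_neg_no_global_solution_general hξ hpos
    (fun t ht ↦ (hdiff t ht).1.hasDerivAt.hasDerivWithinAt)
    (fun t ht ↦ (hdiff t ht).2.hasDerivAt.hasDerivWithinAt) (fun t ht ↦ (hode t ht).le)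
end

section
/- Let N ≥ 2 be an integer, γ > 1 and ξ < 0. Let T ∈ (0, ∞] and let a_1,…,a_N : [0,T) → ℝ be twice differentiable functions with a_i(t) > 0 for all t ∈ [0,T), satisfying the Emden dynamical system ä_i(t) = ξ / (a_i(t)·(∏_{k=1}^N a_k(t))^{γ−1}), with a_i(0) = a_{i0} > 0 and ȧ_i(0) = a_{i1}. Suppose a_{j1} < 0 for at least one index j. Then T ≤ min{ −a_{i0}/a_{i1} : i ∈ {1,…,N}, a_{i1} < 0 }; i.e., the positive solution cannot be continued past this finite time. -/
open scoped ENNReal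

/-!
Positivity makes every acceleration `äᵢ` nonpositive when `ξ ≤ 0`, so each `aᵢ` is concave and lies
below its tangent line at time `0`. If `ȧᵢ(0) < 0`, that line vanishes at `-aᵢ(0) / ȧᵢ(0)`, a time
which positivity therefore excludes from `[0, T)`.
-/

section Concave

variable {s : Set ℝ} {f : ℝ → ℝ} {v x t : ℝ}

theorem le_add_mul_sub_of_concaveOn (hf : ConcaveOn ℝ s f) (hx : x ∈ s) (ht : t ∈ s)
    (hxt : x ≤ t) (hfx : HasDerivWithinAt f v s x) : f t ≤ f x + v * (t - x) := by
  obtain rfl | hlt := hxt.eq_or_lt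
  · simp
  have hslope : slope f x t ≤ v := hf.slope_le_of_hasDerivWithinAt hx ht hlt hfx
  rw [slope_def_field, div_le_iff₀ (sub_pos.2 hlt)] at hslope
  linarith

theorem sub_lt_neg_div_of_concaveOn_of_pos (hf : ConcaveOn ℝ s f) (hx : x ∈ s) (ht : t ∈ s)
    (hxt : x ≤ t) (hfx : HasDerivWithinAt f v s x) (hv : v < 0) (hpos : 0 < f t) :
    t - x < -f x / v := by
  rw [lt_div_iff_of_neg hv]
  linarith [le_add_mul_sub_of_concaveOn hf hx ht hxt hfx]

end Concave

/-- The time interval `[0, T)` as a set of reals, the endpoint `T` being possibly infinite. -/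
def timeInterval (T : ℝ≥0∞) : Set ℝ :=
  {t | 0 ≤ t ∧ ENNReal.ofReal t < T}

theorem convex_timeInterval (T : ℝ≥0∞) : Convex ℝ (timeInterval T) :=
  (Set.ordConnected_Ici.inter (Set.ordConnected_Iio.preimage_mono ENNReal.ofReal_mono)).convex

/-- A positive solution `a` on `s` of the Emden system with parameters `γ` and `ξ`. The velocities
`v = ȧ` are part of the data, and derivatives are taken within `s`, hence are one-sided at an
endpoint of `s`. -/
structure IsPositiveEmdenSolution {ι : Type*} [Fintype ι] (γ ξ : ℝ) (s : Set ℝ)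
    (a v : ι → ℝ → ℝ) : Prop where
  pos : ∀ i, ∀ t ∈ s, 0 < a i t
  hasDerivWithinAt : ∀ i, ∀ t ∈ s, HasDerivWithinAt (a i) (v i t) s t
  hasDerivWithinAt_velocity : ∀ i, ∀ t ∈ s,
    HasDerivWithinAt (v i) (ξ / (a i t * (∏ k, a k t) ^ (γ - 1))) s t

namespace IsPositiveEmdenSolution

variable {ι : Type*} [Fintype ι] {γ ξ : ℝ} {s : Set ℝ} {a v : ι → ℝ → ℝ}

theorem of_deriv (hpos : ∀ i, ∀ t ∈ s, 0 < a i t)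
    (hdiff : ∀ i, ∀ t ∈ s, DifferentiableAt ℝ (a i) t ∧ DifferentiableAt ℝ (deriv (a i)) t)
    (heq : ∀ i, ∀ t ∈ s, deriv (deriv (a i)) t = ξ / (a i t * (∏ k, a k t) ^ (γ - 1))) :
    IsPositiveEmdenSolution γ ξ s a fun i => deriv (a i) where
  pos := hpos
  hasDerivWithinAt i t ht := (hdiff i t ht).1.hasDerivAt.hasDerivWithinAt
  hasDerivWithinAt_velocity i t ht := heq i t ht ▸ (hdiff i t ht).2.hasDerivAt.hasDerivWithinAt

theorem acceleration_nonpos (h : IsPositiveEmdenSolution γ ξ s a v) (hξ : ξ ≤ 0) (i : ι) {t : ℝ}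
    (ht : t ∈ s) : ξ / (a i t * (∏ k, a k t) ^ (γ - 1)) ≤ 0 := by
  have hprod : 0 < ∏ k, a k t := Finset.prod_pos fun k _ => h.pos k t ht
  exact div_nonpos_of_nonpos_of_nonneg hξ
    (mul_pos (h.pos i t ht) (Real.rpow_pos_of_pos hprod _)).le

theorem concaveOn (h : IsPositiveEmdenSolution γ ξ s a v) (hs : Convex ℝ s) (hξ : ξ ≤ 0) (i : ι) :
    ConcaveOn ℝ s (a i) :=
  concaveOn_of_hasDerivWithinAt2_nonpos hs
    (fun t ht => (h.hasDerivWithinAt i t ht).continuousWithinAt)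
    (fun t ht => (h.hasDerivWithinAt i t (interior_subset ht)).mono interior_subset)
    (fun t ht => (h.hasDerivWithinAt_velocity i t (interior_subset ht)).mono interior_subset)
    (fun _ ht => h.acceleration_nonpos hξ i (interior_subset ht))

end IsPositiveEmdenSolution

theorem emden_system_xi_neg_blowup_general {ι : Type*} [Fintype ι] {γ ξ : ℝ} {T : ℝ≥0∞}
    {a v : ι → ℝ → ℝ} (h : IsPositiveEmdenSolution γ ξ (timeInterval T) a v) (hξ : ξ ≤ 0) {i : ι}
    (hi : v i 0 < 0) : T ≤ ENNReal.ofReal (-(a i 0) / v i 0) := by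
  by_contra! hlt
  have h0 : 0 ∈ timeInterval T := ⟨le_rfl, by simpa using hlt.pos⟩
  have hτ_nonneg : 0 ≤ -(a i 0) / v i 0 :=
    div_nonneg_of_nonpos (neg_nonpos.2 (h.pos i 0 h0).le) hi.le
  have hτ : -(a i 0) / v i 0 ∈ timeInterval T := ⟨hτ_nonneg, hlt⟩
  have hτ_lt := sub_lt_neg_div_of_concaveOn_of_pos (h.concaveOn (convex_timeInterval T) hξ i) h0 hτ
    hτ_nonneg (h.hasDerivWithinAt i 0 h0) hi (h.pos i _ hτ)
  rw [sub_zero] at hτ_lt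
  exact hτ_lt.false

/-- For `γ > 1` and `ξ < 0`, if the positive solution
`a₁,…,a_N` of the Emden dynamical system `äᵢ = ξ/(aᵢ (∏ₖ aₖ)^{γ−1})` on
`[0,T)` has some initial velocity `a_{j1} < 0`, then the solution cannot be
continued past the finite time `min{−a_{i0}/a_{i1} : a_{i1} < 0}`, i.e.
`T ≤ min{−a_{i0}/a_{i1} : a_{i1} < 0}`. -/
theorem emden_system_xi_neg_blowup
    (N : ℕ) (hN : 2 ≤ N)
    (γ ξ : ℝ) (hγ : 1 < γ) (hξ : ξ < 0)
    (T : ℝ≥0∞) (hT : 0 < T)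
    (a : Fin N → ℝ → ℝ) (a0 a1 : Fin N → ℝ)
    (ha0 : ∀ i : Fin N, 0 < a0 i)
    (ha_pos : ∀ i : Fin N, ∀ t : ℝ, 0 ≤ t → ENNReal.ofReal t < T → 0 < a i t)
    (ha_diff : ∀ i : Fin N, ∀ t : ℝ, 0 ≤ t → ENNReal.ofReal t < T →
      DifferentiableAt ℝ (a i) t ∧ DifferentiableAt ℝ (deriv (a i)) t)
    (hEmden : ∀ i : Fin N, ∀ t : ℝ, 0 ≤ t → ENNReal.ofReal t < T →
      deriv (deriv (a i)) t = ξ / (a i t * (∏ k : Fin N, a k t) ^ (γ - 1)))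
    (hinit0 : ∀ i : Fin N, a i 0 = a0 i)
    (hinit1 : ∀ i : Fin N, deriv (a i) 0 = a1 i)
    (hj : ∃ j : Fin N, a1 j < 0) :
    T ≤ sInf {x : ℝ≥0∞ | ∃ i : Fin N, a1 i < 0 ∧ x = ENNReal.ofReal (-(a0 i) / a1 i)} := by
  refine le_sInf fun _ ⟨i, hi, hx⟩ => ?_
  rw [hx, ← hinit0, ← hinit1]
  have hsol : IsPositiveEmdenSolution γ ξ (timeInterval T) a fun i => deriv (a i) :=
    .of_deriv (fun i t ht => ha_pos i t ht.1 ht.2) (fun i t ht => ha_diff i t ht.1 ht.2)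
      (fun i t ht => hEmden i t ht.1 ht.2)
  exact emden_system_xi_neg_blowup_general hsol hξ.le (hinit1 i ▸ hi)
end

section
/- Let N ≥ 2 be an integer, γ > 1, ξ > 0, and let a_{i0} > 0 and a_{i1} ≥ 0 for i = 1,…,N. Then there exist twice differentiable functions a_1,…,a_N : [0,∞) → ℝ with a_i(t) > 0 for all t ≥ 0 satisfying the Emden dynamical system ä_i(t) = ξ / (a_i(t)·(∏_{k=1}^N a_k(t))^{γ−1}) for all t ≥ 0, with a_i(0) = a_{i0} and ȧ_i(0) = a_{i1}; i.e., the system has a global-in-time positive solution. -/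
/-!
Since `ξ ≥ 0`, every component of the force is nonnegative on the positive orthant, so components
that start with nonnegative velocity never drop below their initial values. On the orthant
`{x | a0 ≤ x}` the force is bounded and Lipschitz, being a product of powers of the coordinates with
nonpositive exponents. Evaluating it at `x ⊔ a0` instead of `x` gives a bounded Lipschitz force on
the whole space, whose solutions are global; the solution starting at `a0` stays in the orthant for
`t ≥ 0`, where the two forces agree.
-/

open Set
open scoped NNReal

section IntegralCurve

variable {E : Type*} [NormedAddCommGroup E] [NormedSpace ℝ E] {f : ℝ → E → E} {x₀ : E}

lemma isIntegralCurveOn_Ioo_eqOn_of_lipschitzWith {K : ℝ≥0} {a b t₀ : ℝ} {α β : ℝ → E}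
    (hlip : ∀ t ∈ Ioo a b, LipschitzWith K (f t)) (ht₀ : t₀ ∈ Ioo a b)
    (hα : IsIntegralCurveOn α f (Ioo a b)) (hβ : IsIntegralCurveOn β f (Ioo a b))
    (h : α t₀ = β t₀) : EqOn α β (Ioo a b) :=
  ODE_solution_unique_of_mem_Ioo (fun t ht ↦ (hlip t ht).lipschitzOnWith) ht₀
    (fun t ht ↦ ⟨(hα t ht).hasDerivAt (Ioo_mem_nhds ht.1 ht.2), mem_univ _⟩)
    (fun t ht ↦ ⟨(hβ t ht).hasDerivAt (Ioo_mem_nhds ht.1 ht.2), mem_univ _⟩) h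

lemma mem_Ioo_neg_iff_nnnorm_lt {t : ℝ} {T : ℝ≥0} : t ∈ Ioo (-T : ℝ) T ↔ ‖t‖₊ < T := by
  rw [mem_Ioo, ← abs_lt, ← Real.norm_eq_abs, ← coe_nnnorm, NNReal.coe_lt_coe]

lemma isIntegralCurve_of_forall_isIntegralCurveOn_Ioo
    (hlip : ∀ T : ℝ≥0, ∃ K : ℝ≥0, ∀ t ∈ Icc (-T : ℝ) T, LipschitzWith K (f t))
    {α : ℝ≥0 → ℝ → E} (hα₀ : ∀ T, α T 0 = x₀)
    (hα : ∀ T : ℝ≥0, IsIntegralCurveOn (α T) f (Ioo (-T) T)) :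
    IsIntegralCurve (fun t ↦ α (‖t‖₊ + 1) t) f := by
  have eqOn_of_le {S T : ℝ≥0} (hST : S ≤ T) : EqOn (α S) (α T) (Ioo (-S) S) := by
    intro t ht
    obtain ⟨K, hK⟩ := hlip S
    have hS : (0 : ℝ) < S := neg_lt_self_iff.1 (ht.1.trans ht.2)
    exact isIntegralCurveOn_Ioo_eqOn_of_lipschitzWith
      (fun s hs ↦ hK s (Ioo_subset_Icc_self hs)) ⟨neg_lt_zero.2 hS, hS⟩ (hα S)
      ((hα T).mono (Ioo_subset_Ioo (by gcongr) (by gcongr))) ((hα₀ S).trans (hα₀ T).symm) ht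
  intro t
  set T := ‖t‖₊ + 2
  have ht : t ∈ Ioo (-T : ℝ) T := mem_Ioo_neg_iff_nnnorm_lt.2 (lt_add_of_pos_right _ two_pos)
  have glued_eq {s : ℝ} (hs : ‖s‖₊ < ‖t‖₊ + 1) : α (‖s‖₊ + 1) s = α T s := by
    refine eqOn_of_le ?_ (mem_Ioo_neg_iff_nnnorm_lt.2 (lt_add_one _))
    calc ‖s‖₊ + 1 ≤ ‖t‖₊ + 1 + 1 := by gcongr
      _ = T := by rw [add_assoc, one_add_one_eq_two]
  have hT : HasDerivAt (α T) (f t (α T t)) t := (hα T t ht).hasDerivAt (Ioo_mem_nhds ht.1 ht.2)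
  rw [← glued_eq (lt_add_one _)] at hT
  refine hT.congr_of_eventuallyEq ?_
  filter_upwards [continuous_nnnorm.continuousAt.eventually_lt_const (lt_add_one ‖t‖₊)]
    with s hs using glued_eq hs

variable [CompleteSpace E]

lemma exists_isIntegralCurveOn_Icc_of_lipschitzWith_of_norm_le {T K L : ℝ≥0}
    (hlip : ∀ t ∈ Icc (-T : ℝ) T, LipschitzWith K (f t))
    (hbd : ∀ t ∈ Icc (-T : ℝ) T, ∀ x, ‖f t x‖ ≤ L)
    (hcont : ∀ x, ContinuousOn (f · x) (Icc (-T) T)) (x₀ : E) :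
    ∃ α : ℝ → E, α 0 = x₀ ∧ IsIntegralCurveOn α f (Icc (-T) T) := by
  have h0 : (0 : ℝ) ∈ Icc (-T : ℝ) T := ⟨neg_nonpos.2 T.2, T.2⟩
  have hf : IsPicardLindelof f (⟨0, h0⟩ : Icc (-T : ℝ) T) x₀ (L * T) 0 L K :=
    { lipschitzOnWith := fun t ht ↦ (hlip t ht).lipschitzOnWith
      continuousOn := fun x _ ↦ hcont x
      norm_le := fun t ht x _ ↦ hbd t ht x
      mul_max_le := by simp }
  exact hf.exists_eq_forall_mem_Icc_hasDerivWithinAt₀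

theorem exists_isIntegralCurve_of_lipschitzWith_of_norm_le
    (hlip : ∀ T : ℝ≥0, ∃ K : ℝ≥0, ∀ t ∈ Icc (-T : ℝ) T, LipschitzWith K (f t))
    (hbd : ∀ T : ℝ≥0, ∃ L : ℝ≥0, ∀ t ∈ Icc (-T : ℝ) T, ∀ x, ‖f t x‖ ≤ L)
    (hcont : ∀ x, Continuous (f · x)) (x₀ : E) :
    ∃ α : ℝ → E, α 0 = x₀ ∧ IsIntegralCurve α f := by
  have on_Icc (T : ℝ≥0) : ∃ α : ℝ → E, α 0 = x₀ ∧ IsIntegralCurveOn α f (Icc (-T) T) := by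
    obtain ⟨K, hK⟩ := hlip T
    obtain ⟨L, hL⟩ := hbd T
    exact exists_isIntegralCurveOn_Icc_of_lipschitzWith_of_norm_le hK hL
      (fun x ↦ (hcont x).continuousOn) x₀
  choose α hα₀ hα using on_Icc
  exact ⟨fun t ↦ α (‖t‖₊ + 1) t, hα₀ _, isIntegralCurve_of_forall_isIntegralCurveOn_Ioo hlip hα₀
    fun T ↦ (hα T).mono Ioo_subset_Icc_self⟩

/-- In the coordinates `(u, v) = (x - t • v, v)` the system `x' = v`, `v' = g x` has a right-hand
side that is bounded on compact time intervals, unlike `(x, v) ↦ (v, g x)`. -/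
theorem exists_hasDerivAt_hasDerivAt_of_lipschitzWith_of_norm_le {g : E → E} {K B : ℝ≥0}
    (hg : LipschitzWith K g) (hB : ∀ x, ‖g x‖ ≤ B) (x₀ v₀ : E) :
    ∃ x v : ℝ → E, x 0 = x₀ ∧ v 0 = v₀ ∧
      ∀ t, HasDerivAt x (v t) t ∧ HasDerivAt v (g (x t)) t := by
  let f (t : ℝ) (z : E × E) : E × E := (-(t • g (z.1 + t • z.2)), g (z.1 + t • z.2))
  have hlip (t : ℝ) : LipschitzWith
      (max (‖t‖₊ * (K * (1 + ‖t‖₊ * 1))) (K * (1 + ‖t‖₊ * 1))) (f t) := by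
    have hg_comp := hg.comp (LipschitzWith.prod_fst.add
      ((lipschitzWith_smul t).comp (LipschitzWith.prod_snd (α := E) (β := E))))
    exact ((lipschitzWith_smul t).comp hg_comp).neg.prodMk hg_comp
  have hbd (t : ℝ) (z : E × E) : ‖f t z‖ ≤ max (‖t‖ * B) B := by
    refine max_le_max ?_ (hB _)
    calc ‖-(t • g (z.1 + t • z.2))‖ = ‖t‖ * ‖g (z.1 + t • z.2)‖ := by rw [norm_neg, norm_smul]
      _ ≤ ‖t‖ * B := by gcongr; exact hB _
  have hcont (z : E × E) : Continuous (f · z) := by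
    have := hg.continuous
    fun_prop
  have nnnorm_le {T : ℝ≥0} {t : ℝ} (ht : t ∈ Icc (-T : ℝ) T) : ‖t‖₊ ≤ T := abs_le.2 ht
  obtain ⟨z, hz₀, hz⟩ := exists_isIntegralCurve_of_lipschitzWith_of_norm_le (f := f)
    (fun T ↦ ⟨max (T * (K * (1 + T * 1))) (K * (1 + T * 1)), fun t ht ↦ (hlip t).weaken <| by
      have := nnnorm_le ht
      gcongr⟩)
    (fun T ↦ ⟨max (T * B) B, fun t ht z ↦ (hbd t z).trans <| by
      have := nnnorm_le ht
      push_cast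
      gcongr
      exact this⟩)
    hcont (x₀, v₀)
  refine ⟨fun t ↦ (z t).1 + t • (z t).2, fun t ↦ (z t).2, by simp [hz₀], by simp [hz₀],
    fun t ↦ ?_⟩
  have hu : HasDerivAt (fun t ↦ (z t).1) (f t (z t)).1 t := (hz t).fst
  have hv : HasDerivAt (fun t ↦ (z t).2) (f t (z t)).2 t := (hz t).snd
  exact ⟨(hu.add ((hasDerivAt_id t).smul hv)).congr_deriv (by simp [f]), hv⟩

end IntegralCurve

/-- The function `f` is bounded and Lipschitz on `s`. Unlike being Lipschitz alone, this property is
preserved by products. -/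
def BoundedLipschitzOn {X E : Type*} [PseudoMetricSpace X] [SeminormedAddCommGroup E]
    (f : X → E) (s : Set X) : Prop :=
  ∃ K B : ℝ≥0, LipschitzOnWith K f s ∧ ∀ x ∈ s, ‖f x‖ ≤ B

namespace BoundedLipschitzOn

variable {X Y E ι : Type*} [PseudoMetricSpace X] [PseudoMetricSpace Y]
  [SeminormedAddCommGroup E] {s : Set X}

lemma const (c : E) : BoundedLipschitzOn (fun _ : X ↦ c) s :=
  ⟨0, ‖c‖₊, (LipschitzWith.const c).lipschitzOnWith, fun _ _ ↦ le_rfl⟩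

lemma congr {f g : X → E} (hf : BoundedLipschitzOn f s) (h : EqOn f g s) :
    BoundedLipschitzOn g s := by
  obtain ⟨K, B, hK, hB⟩ := hf
  refine ⟨K, B, fun x hx y hy ↦ ?_, fun x hx ↦ ?_⟩
  · rw [← h hx, ← h hy]
    exact hK hx hy
  · rw [← h hx]
    exact hB x hx

lemma comp {f : Y → E} {t : Set Y} {g : X → Y} {K : ℝ≥0} (hf : BoundedLipschitzOn f t)
    (hg : LipschitzOnWith K g s) (hgst : MapsTo g s t) : BoundedLipschitzOn (f ∘ g) s := by
  obtain ⟨K', B, hK', hB⟩ := hf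
  exact ⟨K' * K, B, hK'.comp hg hgst, fun x hx ↦ hB (g x) (hgst hx)⟩

lemma pi [Fintype ι] {f : X → ι → E} (hf : ∀ i, BoundedLipschitzOn (f · i) s) :
    BoundedLipschitzOn f s := by
  choose K B hK hB using hf
  refine ⟨∑ i, K i, ∑ i, B i, fun x hx y hy ↦ edist_pi_le_iff.2 fun i ↦ ?_, fun x hx ↦
    (pi_norm_le_iff_of_nonneg (NNReal.coe_nonneg _)).2 fun i ↦ (hB i x hx).trans ?_⟩
  · refine (hK i hx hy).trans ?_
    gcongr
    exact Finset.single_le_sum_of_canonicallyOrdered (Finset.mem_univ i)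
  · exact NNReal.coe_le_coe.2 (Finset.single_le_sum_of_canonicallyOrdered (Finset.mem_univ i))

lemma mul {R : Type*} [NonUnitalSeminormedRing R] {f g : X → R} (hf : BoundedLipschitzOn f s)
    (hg : BoundedLipschitzOn g s) : BoundedLipschitzOn (fun x ↦ f x * g x) s := by
  obtain ⟨Kf, Bf, hKf, hBf⟩ := hf
  obtain ⟨Kg, Bg, hKg, hBg⟩ := hg
  refine ⟨Bf * Kg + Kf * Bg, Bf * Bg, LipschitzOnWith.of_dist_le_mul fun x hx y hy ↦ ?_,
    fun x hx ↦ (norm_mul_le _ _).trans ?_⟩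
  · have hfxy := hKf.dist_le_mul x hx y hy
    have hgxy := hKg.dist_le_mul x hx y hy
    rw [dist_eq_norm] at hfxy hgxy ⊢
    have hfx := hBf x hx
    have hgy := hBg y hy
    calc ‖f x * g x - f y * g y‖ = ‖f x * (g x - g y) + (f x - f y) * g y‖ := by
          rw [mul_sub, sub_mul, sub_add_sub_cancel]
      _ ≤ ‖f x‖ * ‖g x - g y‖ + ‖f x - f y‖ * ‖g y‖ :=
          norm_add_le_of_le (norm_mul_le _ _) (norm_mul_le _ _)
      _ ≤ Bf * (Kg * dist x y) + Kf * dist x y * Bg := by gcongr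
      _ = (Bf * Kg + Kf * Bg : ℝ≥0) * dist x y := by push_cast; ring
  · have hfx := hBf x hx
    have hgx := hBg x hx
    push_cast
    gcongr

lemma finset_prod {R : Type*} [SeminormedCommRing R] {f : ι → X → R} {u : Finset ι}
    (hf : ∀ i ∈ u, BoundedLipschitzOn (f i) s) :
    BoundedLipschitzOn (fun x ↦ ∏ i ∈ u, f i x) s := by
  classical
  induction u using Finset.induction_on with
  | empty => simpa only [Finset.prod_empty] using const 1
  | insert i u hi ih =>
    simp only [Finset.prod_insert hi]
    exact (hf i (Finset.mem_insert_self i u)).mul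
      (ih fun j hj ↦ hf j (Finset.mem_insert_of_mem hj))

end BoundedLipschitzOn

lemma norm_rpow_le_norm_rpow_of_nonpos {c y p : ℝ} (hc : 0 < c) (hcy : c ≤ y) (hp : p ≤ 0) :
    ‖y ^ p‖ ≤ ‖c ^ p‖ := by
  rw [Real.norm_rpow_of_nonneg (hc.le.trans hcy), Real.norm_rpow_of_nonneg hc.le,
    Real.norm_of_nonneg (hc.le.trans hcy), Real.norm_of_nonneg hc.le]
  exact Real.rpow_le_rpow_of_nonpos hc hcy hp

lemma boundedLipschitzOn_rpow_const_Ici {c p : ℝ} (hc : 0 < c) (hp : p ≤ 0) :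
    BoundedLipschitzOn (fun y : ℝ ↦ y ^ p) (Ici c) := by
  refine ⟨‖p‖₊ * ‖c ^ (p - 1)‖₊, ‖c ^ p‖₊,
    (convex_Ici c).lipschitzOnWith_of_nnnorm_hasDerivWithin_le (f' := fun y ↦ p * y ^ (p - 1))
      (fun y hy ↦ ?_) (fun y hy ↦ ?_), fun y hy ↦ ?_⟩
  · exact (Real.hasDerivAt_rpow_const (Or.inl (hc.trans_le hy).ne')).hasDerivWithinAt
  · rw [nnnorm_mul]
    gcongr 1
    exact norm_rpow_le_norm_rpow_of_nonpos hc hy (by linarith)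
  · exact norm_rpow_le_norm_rpow_of_nonpos hc hy hp

lemma monotoneOn_Ici_of_hasDerivAt_nonneg {ι : Type*} {x v : ℝ → ι → ℝ} {t₀ : ℝ}
    (hx : ∀ t ≥ t₀, HasDerivAt x (v t) t) (hv : ∀ t ≥ t₀, 0 ≤ v t) : MonotoneOn x (Ici t₀) := by
  intro s hs t ht hst i
  have hxi (r : ℝ) (hr : t₀ ≤ r) : HasDerivAt (x · i) (v r i) r := hasDerivAt_pi.1 (hx r hr) i
  exact monotoneOn_of_hasDerivWithinAt_nonneg (convex_Ici t₀)
    (fun r hr ↦ (hxi r hr).continuousAt.continuousWithinAt)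
    (fun r hr ↦ (hxi r (interior_subset hr)).hasDerivWithinAt)
    (fun r hr ↦ hv r (interior_subset hr) i) hs ht hst

section Barrier

variable {ι : Type*} [Fintype ι]

lemma lipschitzWith_pi_sup_const (c : ι → ℝ) : LipschitzWith 1 (fun x : ι → ℝ ↦ x ⊔ c) :=
  fun x y ↦ edist_pi_le_iff.2 fun i ↦
    (LipschitzWith.eval (α := fun _ : ι ↦ ℝ) i).max_const (c i) x y

theorem exists_hasDerivAt_hasDerivAt_of_nonneg_on_Ici {g : (ι → ℝ) → ι → ℝ} {x₀ v₀ : ι → ℝ}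
    (hg : BoundedLipschitzOn g (Ici x₀)) (hg_nonneg : ∀ x ≥ x₀, 0 ≤ g x) (hv₀ : 0 ≤ v₀) :
    ∃ x v : ℝ → ι → ℝ, x 0 = x₀ ∧ v 0 = v₀ ∧ (∀ t, HasDerivAt x (v t) t) ∧
      ∀ t ≥ 0, x₀ ≤ x t ∧ HasDerivAt v (g (x t)) t := by
  obtain ⟨K, B, hK, hB⟩ := hg.comp (lipschitzWith_pi_sup_const x₀).lipschitzOnWith
    (s := univ) (fun _ _ ↦ mem_Ici.2 le_sup_right)
  obtain ⟨x, v, hx0, hv0, hxv⟩ := exists_hasDerivAt_hasDerivAt_of_lipschitzWith_of_norm_le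
    (lipschitzOnWith_univ.1 hK) (fun x ↦ hB x (mem_univ x)) x₀ v₀
  have v_nonneg (t : ℝ) (ht : 0 ≤ t) : 0 ≤ v t :=
    calc 0 ≤ v 0 := hv0 ▸ hv₀
      _ ≤ v t := monotoneOn_Ici_of_hasDerivAt_nonneg (fun s _ ↦ (hxv s).2)
        (fun s _ ↦ hg_nonneg (x s ⊔ x₀) le_sup_right) self_mem_Ici ht ht
  have le_x (t : ℝ) (ht : 0 ≤ t) : x₀ ≤ x t :=
    calc x₀ = x 0 := hx0.symm
      _ ≤ x t := monotoneOn_Ici_of_hasDerivAt_nonneg (fun s _ ↦ (hxv s).1) v_nonneg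
        self_mem_Ici ht ht
  refine ⟨x, v, hx0, hv0, fun t ↦ (hxv t).1, fun t ht ↦ ⟨le_x t ht, ?_⟩⟩
  have hv := (hxv t).2
  rwa [Function.comp_apply, sup_eq_left.2 (le_x t ht)] at hv

end Barrier

section Emden

variable {ι : Type*} [Fintype ι] {γ ξ : ℝ}

/-- The right-hand side of the Emden dynamical system `ä = emdenForce γ ξ a`. -/
noncomputable def emdenForce (γ ξ : ℝ) (x : ι → ℝ) (i : ι) : ℝ :=
  ξ / (x i * (∏ k, x k) ^ (γ - 1))

lemma emdenForce_nonneg (hξ : 0 ≤ ξ) {x : ι → ℝ} (hx : 0 ≤ x) : 0 ≤ emdenForce γ ξ x :=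
  fun i ↦ div_nonneg hξ
    (mul_nonneg (hx i) (Real.rpow_nonneg (Finset.prod_nonneg fun k _ ↦ hx k) _))

lemma emdenForce_apply_eq_mul_prod_rpow {x : ι → ℝ} (hx : 0 ≤ x) (i : ι) :
    emdenForce γ ξ x i = ξ * (x i ^ (-1 : ℝ) * ∏ k, x k ^ (1 - γ)) := by
  rw [emdenForce, Real.finsetProd_rpow _ _ fun k _ ↦ hx k, ← neg_sub γ 1,
    Real.rpow_neg (Finset.prod_nonneg fun k _ ↦ hx k), Real.rpow_neg_one, div_eq_mul_inv, mul_inv]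

lemma boundedLipschitzOn_emdenForce (hγ : 1 ≤ γ) {c : ι → ℝ} (hc : ∀ i, 0 < c i) :
    BoundedLipschitzOn (emdenForce γ ξ) (Ici c) := by
  have coord_rpow (i : ι) {p : ℝ} (hp : p ≤ 0) :
      BoundedLipschitzOn (fun x : ι → ℝ ↦ x i ^ p) (Ici c) :=
    (boundedLipschitzOn_rpow_const_Ici (hc i) hp).comp
      (LipschitzWith.eval (α := fun _ : ι ↦ ℝ) i).lipschitzOnWith fun x hx ↦ hx i
  refine BoundedLipschitzOn.pi fun i ↦ BoundedLipschitzOn.congr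
    (f := fun x : ι → ℝ ↦ ξ * (x i ^ (-1 : ℝ) * ∏ k, x k ^ (1 - γ))) ?_ fun x hx ↦
      (emdenForce_apply_eq_mul_prod_rpow (fun k ↦ (hc k).le.trans (hx k)) i).symm
  exact .mul (.const ξ) (.mul (coord_rpow i (by norm_num))
    (.finset_prod fun k _ ↦ coord_rpow k (sub_nonpos.2 hγ)))

theorem emden_system_xi_pos_global_existence_general (hγ : 1 ≤ γ) (hξ : 0 ≤ ξ) (a0 a1 : ι → ℝ)
    (ha0 : ∀ i, 0 < a0 i) (ha1 : ∀ i, 0 ≤ a1 i) :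
    ∃ a : ι → ℝ → ℝ,
      (∀ i, ∀ t : ℝ, 0 ≤ t → 0 < a i t) ∧
      (∀ i, ∀ t : ℝ, 0 ≤ t → DifferentiableAt ℝ (a i) t ∧ DifferentiableAt ℝ (deriv (a i)) t) ∧
      (∀ i, ∀ t : ℝ, 0 ≤ t → deriv (deriv (a i)) t = ξ / (a i t * (∏ k, a k t) ^ (γ - 1))) ∧
      (∀ i, a i 0 = a0 i) ∧
      (∀ i, deriv (a i) 0 = a1 i) := by
  obtain ⟨x, v, hx0, hv0, hx, hv⟩ := exists_hasDerivAt_hasDerivAt_of_nonneg_on_Ici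
    (boundedLipschitzOn_emdenForce (ξ := ξ) hγ ha0)
    (fun x hx ↦ emdenForce_nonneg hξ fun i ↦ (ha0 i).le.trans (hx i)) ha1
  have hxi (i : ι) (t : ℝ) : HasDerivAt (x · i) (v t i) t := hasDerivAt_pi.1 (hx t) i
  have hvi (i : ι) (t : ℝ) (ht : 0 ≤ t) : HasDerivAt (v · i) (emdenForce γ ξ (x t) i) t :=
    hasDerivAt_pi.1 (hv t ht).2 i
  have deriv_x (i : ι) : deriv (x · i) = (v · i) := funext fun t ↦ (hxi i t).deriv
  refine ⟨fun i t ↦ x t i, fun i t ht ↦ (ha0 i).trans_le ((hv t ht).1 i),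
    fun i t ht ↦ ⟨(hxi i t).differentiableAt, ?_⟩, fun i t ht ↦ ?_, fun i ↦ congrFun hx0 i,
    fun i ↦ ?_⟩
  · rw [deriv_x]
    exact (hvi i t ht).differentiableAt
  · rw [deriv_x]
    exact (hvi i t ht).deriv
  · rw [deriv_x]
    exact congrFun hv0 i

end Emden

/-- For `γ > 1`, `ξ > 0`, and initial data `a_{i0} > 0`,
`a_{i1} ≥ 0`, the Emden dynamical system `äᵢ = ξ/(aᵢ (∏ₖ aₖ)^{γ−1})`,
`aᵢ(0) = a_{i0}`, `ȧᵢ(0) = a_{i1}` has a global-in-time positive, twice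
differentiable solution on `[0,∞)`. -/
theorem emden_system_xi_pos_global_existence
    (N : ℕ) (hN : 2 ≤ N)
    (γ ξ : ℝ) (hγ : 1 < γ) (hξ : 0 < ξ)
    (a0 a1 : Fin N → ℝ)
    (ha0 : ∀ i : Fin N, 0 < a0 i) (ha1 : ∀ i : Fin N, 0 ≤ a1 i) :
    ∃ a : Fin N → ℝ → ℝ,
      (∀ i : Fin N, ∀ t : ℝ, 0 ≤ t → 0 < a i t) ∧
      (∀ i : Fin N, ∀ t : ℝ, 0 ≤ t →
        DifferentiableAt ℝ (a i) t ∧ DifferentiableAt ℝ (deriv (a i)) t) ∧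
      (∀ i : Fin N, ∀ t : ℝ, 0 ≤ t →
        deriv (deriv (a i)) t = ξ / (a i t * (∏ k : Fin N, a k t) ^ (γ - 1))) ∧
      (∀ i : Fin N, a i 0 = a0 i) ∧
      (∀ i : Fin N, deriv (a i) 0 = a1 i) :=
  emden_system_xi_pos_global_existence_general hγ.le hξ.le a0 a1 ha0 ha1
end
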